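/- For every Dyck path λ of order n, the generating function of cover-inclusive Dyck tilings with lower path λ by the art statistic satisfies Σ_{T ∈ D(λ,*)} q^{art(T)} = [n]_q! / Π_{chords c of λ} [|c|]_q, as an identity of polynomials in q. -/

import Mathlib

open Finset

noncomputable section

/-- A Dyck path of order `n`: a word of `2n` steps (`true` = up-step `(+1,+1)`,
`false` = down-step `(+1,-1)`) from `(-n,0)` to `(n,0)` staying weakly above the x-axis. -/
structure DyckPath (n : ℕ) where
  step : Fin (2 * n) → Bool
  balanced : (Finset.univ.filter fun i => step i = true).card = n
  nonneg : ∀ k : ℕ, k ≤ 2 * n →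
    (Finset.univ.filter fun i : Fin (2 * n) => (i : ℕ) < k ∧ step i = false).card ≤
      (Finset.univ.filter fun i : Fin (2 * n) => (i : ℕ) < k ∧ step i = true).card

namespace DyckPath

/-- Height of the path above column `x` (columns run from `-n` to `n`). -/
def ht {n : ℕ} (P : DyckPath n) (x : ℤ) : ℤ :=
  ((Finset.univ.filter fun i : Fin (2 * n) => ((i : ℕ) : ℤ) < x + n ∧ P.step i = true).card : ℤ) -
    ((Finset.univ.filter fun i : Fin (2 * n) => ((i : ℕ) : ℤ) < x + n ∧ P.step i = false).card : ℤ)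

/-- Height of the path at lattice point number `k`, `0 ≤ k ≤ 2n`
(point `k` lies at column `k - n`). -/
def pt {n : ℕ} (P : DyckPath n) (k : ℕ) : ℤ := P.ht ((k : ℤ) - n)

end DyckPath

/-- `IsChord P p q`: the up-step at (0-indexed) position `p` matches the down-step at
position `q`, forming a chord of `P`. -/
def IsChord {n : ℕ} (P : DyckPath n) (p q : ℕ) : Prop :=
  p < q ∧ q < 2 * n ∧
    (∃ hp : p < 2 * n, P.step ⟨p, hp⟩ = true) ∧
    (∃ hq : q < 2 * n, P.step ⟨q, hq⟩ = false) ∧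
    P.pt (q + 1) = P.pt p ∧
    ∀ m : ℕ, p < m → m ≤ q → P.pt p < P.pt m

/-- A natural labeling of the chord poset of `P`: the chord labeled `i` has its up-step at
(0-indexed) position `l i` and matching down-step at position `r i`; distinct labels name
distinct chords; and if one chord is nested inside another it receives a larger label. -/
structure ChordLabeling {n : ℕ} (P : DyckPath n) where
  l : Fin n → ℕ
  r : Fin n → ℕ
  chord : ∀ i, IsChord P (l i) (r i)
  inj : Function.Injective l
  natural : ∀ i j : Fin n, l j < l i → r i < r j → j < i

/-- The length of the chord labeled `i`: the number of up steps of `P` between and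
including its two endpoints. -/
def chordLen {n : ℕ} {P : DyckPath n} (C : ChordLabeling P) (i : Fin n) : ℕ :=
  (Finset.univ.filter fun m : Fin (2 * n) =>
    C.l i ≤ (m : ℕ) ∧ (m : ℕ) ≤ C.r i ∧ P.step m = true).card

/-- The growth sequence `p_1, …, p_n` associated with a natural chord labeling:
`p i = #{j<i : l j < l i} + #{j<i : r j < l i}`. -/
def seqOf {n : ℕ} {P : DyckPath n} (C : ChordLabeling P) (i : Fin n) : ℕ :=
  (Finset.univ.filter fun j : Fin n => j < i ∧ C.l j < C.l i).card +
    (Finset.univ.filter fun j : Fin n => j < i ∧ C.r j < C.l i).card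

/-- `σ` is the standardization of the word `w` (with distinct letters). -/
def IsStandardization {n : ℕ} (w : Fin n → ℕ) (σ : Equiv.Perm (Fin n)) : Prop :=
  ∀ i j : Fin n, σ i < σ j ↔ w i < w j

/-- `σ ∈ 𝓛(P_λ)`: σ is `L₀ ∘ L⁻¹` for some natural labeling `L` of the chord poset,
equivalently the standardization of the word of left endpoints of a natural labeling. -/
def LinExt {n : ℕ} (P : DyckPath n) (σ : Equiv.Perm (Fin n)) : Prop :=
  ∃ C : ChordLabeling P, IsStandardization C.l σ

/-- Successor index in `Fin n` (used only under the guard `i+1 < n`). -/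
def nextIdx {n : ℕ} (i : Fin n) : Fin n := ⟨((i : ℕ) + 1) % n, Nat.mod_lt _ i.pos⟩

/-- Descent set of a word: positions `i` with `i+1 < n` and `w i > w (i+1)`. -/
def descentFinset {n : ℕ} (w : Fin n → ℕ) : Finset (Fin n) :=
  Finset.univ.filter fun i => (i : ℕ) + 1 < n ∧ w (nextIdx i) < w i

/-- Number of inversions of a word. -/
def wordInv {n : ℕ} (w : Fin n → ℕ) : ℕ :=
  (Finset.univ.filter fun p : Fin n × Fin n => p.1 < p.2 ∧ w p.2 < w p.1).card

/-- The word of values of a permutation. -/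
def permWord {n : ℕ} (σ : Equiv.Perm (Fin n)) : Fin n → ℕ := fun i => (σ i : ℕ)

/-- inv(σ). -/
def permInv {n : ℕ} (σ : Equiv.Perm (Fin n)) : ℕ := wordInv (permWord σ)

/-- des(σ). -/
def permDes {n : ℕ} (σ : Equiv.Perm (Fin n)) : ℕ := (descentFinset (permWord σ)).card

/-- `REM_i(w) = {k > i : w i > w k > w (i+1)}`, the right embraced numbers. -/
def remSet {n : ℕ} (w : Fin n → ℕ) (i : Fin n) : Finset (Fin n) :=
  Finset.univ.filter fun k => i < k ∧ w (nextIdx i) < w k ∧ w k < w i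

/-- desdif(σ) = Σ_{i ∈ DES σ} (σ i − σ (i+1)). -/
def desdif {n : ℕ} (σ : Equiv.Perm (Fin n)) : ℕ :=
  ∑ i ∈ descentFinset (permWord σ), (permWord σ i - permWord σ (nextIdx i))

/-- res(σ) = Σ_{i ∈ DES σ} #{k < i : σ i > σ k > σ (i+1)}. -/
def resStat {n : ℕ} (σ : Equiv.Perm (Fin n)) : ℕ :=
  ∑ i ∈ descentFinset (permWord σ),
    (Finset.univ.filter fun k : Fin n =>
      k < i ∧ permWord σ (nextIdx i) < permWord σ k ∧ permWord σ k < permWord σ i).card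

/-- The Mahonian statistic mad(σ) = desdif(σ) + res(σ). -/
def mad {n : ℕ} (σ : Equiv.Perm (Fin n)) : ℕ := desdif σ + resStat σ

/-- σ avoids the pattern 231. -/
def Avoids231 {n : ℕ} (σ : Equiv.Perm (Fin n)) : Prop :=
  ¬∃ i j k : Fin n, i < j ∧ j < k ∧ σ k < σ i ∧ σ i < σ j

/-- The boxes of the skew shape `lam/mu` (with `mu` weakly above `lam`), each box
recorded by its bottom corner (a lattice point `(x, z)` with `z ≡ x + n (mod 2)`). -/
def skewCells {n : ℕ} (lam mu : DyckPath n) : Finset (ℤ × ℤ) :=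
  ((Finset.Icc (-(n : ℤ)) n) ×ˢ (Finset.Icc (0 : ℤ) n)).filter fun c =>
    lam.ht c.1 ≤ c.2 ∧ c.2 + 2 ≤ mu.ht c.1 ∧ (c.2 - c.1 - n) % 2 = 0

/-- A Dyck tile, recorded by the set of bottom corners of its boxes: these form
a Dyck-path shape, i.e. a ±1-step lattice path whose two ends are lowest. -/
def IsDyckTile (t : Finset (ℤ × ℤ)) : Prop :=
  ∃ (a b : ℤ) (f : ℤ → ℤ), a ≤ b ∧
    (∀ x : ℤ, a ≤ x → x < b → f (x + 1) = f x + 1 ∨ f (x + 1) = f x - 1) ∧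
    f b = f a ∧ (∀ x : ℤ, a ≤ x → x ≤ b → f a ≤ f x) ∧
    t = (Finset.Icc a b).image fun x => (x, f x)

/-- A Dyck tiling of order `n`: a tiling of the skew shape between two Dyck paths of
order `n` by Dyck tiles. -/
structure DyckTiling (n : ℕ) where
  lower : DyckPath n
  upper : DyckPath n
  below : ∀ x : ℤ, lower.ht x ≤ upper.ht x
  tiles : Finset (Finset (ℤ × ℤ))
  isDyck : ∀ t ∈ tiles, IsDyckTile t
  disj : ∀ t ∈ tiles, ∀ u ∈ tiles, t ≠ u → Disjoint t u
  cover : tiles.biUnion id = skewCells lower upper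

namespace DyckTiling

/-- Number of boxes of the skew shape. -/
def area {n : ℕ} (T : DyckTiling n) : ℕ := (skewCells T.lower T.upper).card

/-- Number of tiles. -/
def numTiles {n : ℕ} (T : DyckTiling n) : ℕ := T.tiles.card

/-- art(T) = (area(T) + tiles(T)) / 2. -/
def art {n : ℕ} (T : DyckTiling n) : ℕ := (T.area + T.numTiles) / 2

/-- dis(T): the number of step positions where the lower path steps down while the
upper path steps up. -/
def dis {n : ℕ} (T : DyckTiling n) : ℕ :=
  (Finset.univ.filter fun i : Fin (2 * n) =>
    T.lower.step i = false ∧ T.upper.step i = true).card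

/-- Cover-inclusiveness: whenever a tile has a box strictly above a box of another tile,
its horizontal extent is contained in that of the other tile. -/
def CoverInclusive {n : ℕ} (T : DyckTiling n) : Prop :=
  ∀ t ∈ T.tiles, ∀ u ∈ T.tiles,
    (∃ p ∈ t, ∃ q ∈ u, (p : ℤ × ℤ).1 = (q : ℤ × ℤ).1 ∧ (q : ℤ × ℤ).2 < (p : ℤ × ℤ).2) →
    ∀ p ∈ t, ∃ y : ℤ, ((p : ℤ × ℤ).1, y) ∈ u

end DyckTiling

/-- Height function of the spread at column `s` of a Dyck path. -/
def spreadHt {n : ℕ} (P : DyckPath n) (s x : ℤ) : ℤ :=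
  if x < s then P.ht (x + 1) else if x = s then P.ht s + 1 else P.ht (x - 1)

/-- Spread of a tile at column `s`: points left of `s` move left, points right of `s`
move right, and a point at column `s` is duplicated upward. -/
def spreadTile (s : ℤ) (t : Finset (ℤ × ℤ)) : Finset (ℤ × ℤ) :=
  ((t.filter fun p => p.1 ≤ s).image fun p => (p.1 - 1, p.2)) ∪
    ((t.filter fun p => p.1 = s).image fun p => (p.1, p.2 + 1)) ∪
    ((t.filter fun p => s ≤ p.1).image fun p => (p.1 + 1, p.2))

/-- Spread of a set of tiles at column `s`. -/
def spreadTiles (s : ℤ) (ts : Finset (Finset (ℤ × ℤ))) : Finset (Finset (ℤ × ℤ)) :=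
  ts.image (spreadTile s)

/-- Column `c` is eligible for a tiling with upper-boundary height function `h` and
tile set `ts`: the upper boundary has an up step ending at column `c`, and its point at
column `c` is not the top corner of a one-box tile. -/
def EligibleCol (h : ℤ → ℤ) (ts : Finset (Finset (ℤ × ℤ))) (c : ℤ) : Prop :=
  h c = h (c - 1) + 1 ∧ ({(c, h c - 2)} : Finset (ℤ × ℤ)) ∉ ts

/-- `T'` is the result of the strip-grow map applied to `(T, s)`: spread `T` at `s` and
add a one-box tile on each up step of the (spread) upper boundary starting at a column
`≥ s` (i.e. strictly to the right of column `s`). -/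
def StripGrowRel {n : ℕ} (T : DyckTiling n) (s : ℤ) (T' : DyckTiling (n + 1)) : Prop :=
  (∀ x : ℤ, T'.lower.ht x = spreadHt T.lower s x) ∧
  (∀ x : ℤ, T'.upper.ht x =
    if s ≤ x ∧ spreadHt T.upper s (x + 1) = spreadHt T.upper s x + 1 then
      spreadHt T.upper s x + 2
    else spreadHt T.upper s x) ∧
  T'.tiles = spreadTiles s T.tiles ∪
    ((Finset.Icc s (n : ℤ)).filter fun x =>
        spreadHt T.upper s (x + 1) = spreadHt T.upper s x + 1).image
      (fun x => ({(x, spreadHt T.upper s x)} : Finset (ℤ × ℤ)))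

/-- `T'` is the result of the ribbon-grow map applied to `(T, s)`: spread `T` at `s`,
and if the special column `Q` of the spread tiling is strictly right of `s`, add a
ribbon of one-box tiles at all columns strictly between `s` and `Q`. -/
def RibbonGrowRel {n : ℕ} (T : DyckTiling n) (s : ℤ) (T' : DyckTiling (n + 1)) : Prop :=
  (∀ x : ℤ, T'.lower.ht x = spreadHt T.lower s x) ∧
  ∃ Q : ℤ,
    EligibleCol (spreadHt T.upper s) (spreadTiles s T.tiles) Q ∧
    (∀ c : ℤ, EligibleCol (spreadHt T.upper s) (spreadTiles s T.tiles) c → c ≤ Q) ∧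
    (∀ x : ℤ, T'.upper.ht x =
      if s < x ∧ x < Q then spreadHt T.upper s x + 2 else spreadHt T.upper s x) ∧
    T'.tiles = spreadTiles s T.tiles ∪
      (Finset.Ioo s Q).image (fun x => ({(x, spreadHt T.upper s x)} : Finset (ℤ × ℤ)))

/-- `s` is the special column of `T`: its rightmost eligible column. -/
def SpecialCol {n : ℕ} (T : DyckTiling n) (s : ℤ) : Prop :=
  EligibleCol T.upper.ht T.tiles s ∧ ∀ c : ℤ, EligibleCol T.upper.ht T.tiles c → c ≤ s

/-- In the strip-shrink map applied to `T'` with special column `s`, a one-box tile is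
removed at column `x`: `x` is right of `s` and there is a one-box tile there that is
part of an up step of the upper boundary. -/
def StripRemovedAt {n : ℕ} (T' : DyckTiling n) (s x : ℤ) : Prop :=
  s < x ∧ T'.upper.ht x = T'.upper.ht (x - 1) + 1 ∧
    ({(x, T'.upper.ht x - 2)} : Finset (ℤ × ℤ)) ∈ T'.tiles

instance {n : ℕ} (T' : DyckTiling n) (s x : ℤ) : Decidable (StripRemovedAt T' s x) := by
  unfold StripRemovedAt; infer_instance

/-- `(T, s)` is the result of the strip-shrink map applied to `T'`: `s` is the special
column of `T'`; all one-box tiles right of `s` lying on up steps of the upper boundary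
are removed; and the result is the spread of `T` at `s`. -/
def StripShrinkRel {n : ℕ} (T' : DyckTiling (n + 1)) (T : DyckTiling n) (s : ℤ) : Prop :=
  SpecialCol T' s ∧
  (∀ x : ℤ, spreadHt T.lower s x = T'.lower.ht x) ∧
  (∀ x : ℤ, spreadHt T.upper s x =
    if StripRemovedAt T' s x then T'.upper.ht x - 2 else T'.upper.ht x) ∧
  spreadTiles s T.tiles =
    T'.tiles \ (((Finset.Ioc s ((n : ℤ) + 1)).filter fun x => StripRemovedAt T' s x).image
      fun x => ({(x, T'.upper.ht x - 2)} : Finset (ℤ × ℤ)))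

/-- `(T, s)` is the result of the ribbon-shrink map applied to `T'`: `s` is the special
column of `T'`; the maximal run of topmost one-box tiles in columns `s+1, s+2, …` is
removed; and the result is the spread of `T` at `s`. -/
def RibbonShrinkRel {n : ℕ} (T' : DyckTiling (n + 1)) (T : DyckTiling n) (s : ℤ) : Prop :=
  SpecialCol T' s ∧
  ∃ r : ℤ, s < r ∧
    (∀ x : ℤ, s < x → x < r → ({(x, T'.upper.ht x - 2)} : Finset (ℤ × ℤ)) ∈ T'.tiles) ∧
    ({(r, T'.upper.ht r - 2)} : Finset (ℤ × ℤ)) ∉ T'.tiles ∧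
    (∀ x : ℤ, spreadHt T.lower s x = T'.lower.ht x) ∧
    (∀ x : ℤ, spreadHt T.upper s x =
      if s < x ∧ x < r then T'.upper.ht x - 2 else T'.upper.ht x) ∧
    spreadTiles s T.tiles =
      T'.tiles \ ((Finset.Ioo s r).image fun x => ({(x, T'.upper.ht x - 2)} : Finset (ℤ × ℤ)))

/-- `IsDTS n p T`: `T` is the Dyck tiling `DTS(p_1, …, p_n)` (indices 0-based, so the
growth column for step `i` is `p i - i`). -/
inductive IsDTS : (n : ℕ) → (Fin n → ℕ) → DyckTiling n → Prop where
  | nil (p : Fin 0 → ℕ) (T : DyckTiling 0) : IsDTS 0 p T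
  | cons (n : ℕ) (p : Fin (n + 1) → ℕ) (T : DyckTiling n) (T' : DyckTiling (n + 1)) :
      IsDTS n (fun i => p i.castSucc) T →
      StripGrowRel T ((p (Fin.last n) : ℤ) - n) T' → IsDTS (n + 1) p T'

/-- `IsDTR n p T`: `T` is the Dyck tiling `DTR(p_1, …, p_n)`. -/
inductive IsDTR : (n : ℕ) → (Fin n → ℕ) → DyckTiling n → Prop where
  | nil (p : Fin 0 → ℕ) (T : DyckTiling 0) : IsDTR 0 p T
  | cons (n : ℕ) (p : Fin (n + 1) → ℕ) (T : DyckTiling n) (T' : DyckTiling (n + 1)) :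
      IsDTR n (fun i => p i.castSucc) T →
      RibbonGrowRel T ((p (Fin.last n) : ℤ) - n) T' → IsDTR (n + 1) p T'

/-- `T = DTS(λ, σ)`. -/
def IsDTSof {n : ℕ} (lam : DyckPath n) (σ : Equiv.Perm (Fin n)) (T : DyckTiling n) : Prop :=
  ∃ C : ChordLabeling lam, IsStandardization C.l σ ∧ IsDTS n (seqOf C) T

/-- `T = DTR(λ, σ)`. -/
def IsDTRof {n : ℕ} (lam : DyckPath n) (σ : Equiv.Perm (Fin n)) (T : DyckTiling n) : Prop :=
  ∃ C : ChordLabeling lam, IsStandardization C.l σ ∧ IsDTR n (seqOf C) T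

/-- Increment `a` if it exceeds `p`. -/
def bump (p a : ℕ) : ℕ := if p < a then a + 1 else a

/-- The perfect matching `match(p_1, …, p_n)` of `{1, …, 2n}`. -/
def matchSeq : (n : ℕ) → (Fin n → ℕ) → Finset (ℕ × ℕ)
  | 0, _ => ∅
  | n + 1, p =>
    ((matchSeq n fun i => p i.castSucc).image fun q =>
      (bump (p (Fin.last n)) q.1, bump (p (Fin.last n)) q.2)) ∪
      {(p (Fin.last n) + 1, 2 * (n + 1))}

/-- The number of nestings of a matching: pairs `(a,b)`, `(c,d)` with `c < a < b < d`. -/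
def nestings (M : Finset (ℕ × ℕ)) : ℕ :=
  ((M ×ˢ M).filter fun q => q.2.1 < q.1.1 ∧ q.1.1 < q.1.2 ∧ q.1.2 < q.2.2).card

/-- `w` is the min-word of `M`: the list of the smaller elements of the pairs of `M`,
sorted by the larger elements. -/
def IsMinWord (n : ℕ) (M : Finset (ℕ × ℕ)) (w : Fin n → ℕ) : Prop :=
  ∃ b : Fin n → ℕ, StrictMono b ∧ (∀ i, w i < b i) ∧
    M = Finset.univ.image fun i => (w i, b i)

/-- The number of tiles of `T` containing boxes over both endpoint columns of the
chord with endpoints at step positions `p < q`. -/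
def chordTileCount {n : ℕ} (T : DyckTiling n) (p q : ℕ) : ℕ :=
  (T.tiles.filter fun t =>
    (∃ c ∈ t, (c : ℤ × ℤ).1 = (p : ℤ) + 1 - n) ∧ (∃ c ∈ t, (c : ℤ × ℤ).1 = (q : ℤ) - n)).card

/-- A Dyck tableau of order `n` over the zigzag path `Z` of order `n+1`: a skew shape
`Z/μ` with `n` dots, one in each column of the skew shape through a valley of `Z`. -/
structure DyckTableau (n : ℕ) (Z : DyckPath (n + 1)) where
  upper : DyckPath (n + 1)
  below : ∀ x : ℤ, Z.ht x ≤ upper.ht x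
  dots : Finset (ℤ × ℤ)
  sub : dots ⊆ skewCells Z upper
  card_dots : dots.card = n
  valley : ∀ x : ℤ, Z.ht (x - 1) = Z.ht x + 1 → Z.ht (x + 1) = Z.ht x + 1 →
    (dots.filter fun c => c.1 = x).card = 1

/-- The `q`-integer `[m]_q = 1 + q + ⋯ + q^(m-1)` as a polynomial. -/
def qint (m : ℕ) : Polynomial ℤ := ∑ i ∈ Finset.range m, Polynomial.X ^ i

/-- The `q`-factorial `[n]_q!`. -/
def qfact (n : ℕ) : Polynomial ℤ := ∏ i ∈ Finset.range n, qint (i + 1)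

namespace DyckTilingArt

open Polynomial

/-! ### Weighted completions of a history and the `q`-product formula -/

/-- Weighted number of ways of continuing a history along the word `w`, when `k` tiles lie over
the current column and `st` lists, innermost first, how many tiles cross each open up step. -/
def weightSum : List Bool → ℕ → List ℕ → ℤ[X]
  | [], k, [] => if k = 0 then 1 else 0
  | [], _, _ :: _ => 0
  | true :: w, k, st =>
      ∑ j ∈ Icc (st.headD 0) k, X ^ k * weightSum w k (j :: st) +
        ∑ j ∈ Ico (st.headD 0) k, X ^ (k - 1) * weightSum w (k - 1) (j :: st)
  | false :: w, k, j :: st =>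
      X ^ (k - j) * weightSum w k st + X ^ (k + 1 - j) * weightSum w (k + 1) st
  | false :: _, _, [] => 0

/-- Number of up steps met before the path leaves the current level by `d + 1` down steps. -/
def upsBeforeReturn : ℕ → List Bool → ℕ
  | _, [] => 0
  | d, true :: s => upsBeforeReturn (d + 1) s + 1
  | 0, false :: _ => 0
  | d + 1, false :: s => upsBeforeReturn d s

/-- Product of the `q`-lengths of all chords of a word. -/
def chordProd : List Bool → ℤ[X]
  | [] => 1
  | true :: s => qint (upsBeforeReturn 0 s + 1) * chordProd s
  | false :: s => chordProd s

/-- Balanced words, generated by the first-return decomposition. -/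
inductive Balanced : List Bool → Prop
  | nil : Balanced []
  | node {u v : List Bool} : Balanced u → Balanced v → Balanced (true :: (u ++ false :: v))

/-- A word that runs from height `d` to height `0` without going below `0`. -/
def DescendsFrom : ℕ → List Bool → Prop
  | d, [] => d = 0
  | d, true :: w => DescendsFrom (d + 1) w
  | 0, false :: _ => False
  | d + 1, false :: w => DescendsFrom d w

theorem DescendsFrom.decompose (N : ℕ) : ∀ w : List Bool, w.length ≤ N →
    (DescendsFrom 0 w → Balanced w) ∧
      ∀ d, DescendsFrom (d + 1) w →
        ∃ u v, Balanced u ∧ DescendsFrom d v ∧ w = u ++ false :: v := by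
  induction N with
  | zero =>
    intro w hw
    obtain rfl : w = [] := List.length_eq_zero_iff.1 (by omega)
    exact ⟨fun _ => .nil, fun d h => by simp [DescendsFrom] at h⟩
  | succ N ih =>
    intro w hw
    match w with
    | [] => exact ⟨fun _ => .nil, fun d h => by simp [DescendsFrom] at h⟩
    | true :: w =>
      simp only [List.length_cons] at hw
      refine ⟨fun h => ?_, fun d h => ?_⟩
      · obtain ⟨u, v, hu, hv, rfl⟩ := (ih w (by omega)).2 0 h
        simp only [List.length_append, List.length_cons] at hw
        exact .node hu ((ih v (by omega)).1 hv)
      · obtain ⟨u, v, hu, hv, rfl⟩ := (ih w (by omega)).2 (d + 1) h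
        simp only [List.length_append, List.length_cons] at hw
        obtain ⟨u', v', hu', hv', rfl⟩ := (ih v (by omega)).2 d hv
        exact ⟨_, v', .node hu hu', hv', by simp⟩
    | false :: w => exact ⟨fun h => h.elim, fun d h => ⟨[], w, .nil, h, rfl⟩⟩

theorem DescendsFrom.balanced {w : List Bool} (h : DescendsFrom 0 w) : Balanced w :=
  (DescendsFrom.decompose w.length w le_rfl).1 h

theorem Balanced.upsBeforeReturn_append {u : List Bool} (hu : Balanced u) :
    ∀ d s, upsBeforeReturn d (u ++ s) = u.count true + upsBeforeReturn d s := by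
  induction hu with
  | nil => simp
  | node _ _ iha ihb =>
    intro d s
    simp [upsBeforeReturn, iha, ihb]
    ring

theorem Balanced.chordProd_append {u : List Bool} (hu : Balanced u) :
    ∀ s, chordProd (u ++ s) = chordProd u * chordProd s := by
  induction hu with
  | nil => simp [chordProd]
  | @node a b ha hb iha ihb =>
    intro s
    simp [chordProd, iha, ihb, ha.upsBeforeReturn_append, upsBeforeReturn]
    ring

theorem Balanced.chordProd_node {a b : List Bool} (ha : Balanced a) :
    chordProd (true :: (a ++ false :: b)) =
      qint (a.count true + 1) * chordProd a * chordProd b := by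
  simp [chordProd, ha.chordProd_append, ha.upsBeforeReturn_append, upsBeforeReturn, mul_assoc]

/-- The rising `q`-factorial `[m+1]_q ⋯ [m+n]_q`. -/
def qrise (m n : ℕ) : ℤ[X] := ∏ t ∈ range n, qint (m + t + 1)

theorem qint_add (a b : ℕ) : qint (a + b) = qint a + X ^ a * qint b := by
  simp [qint, sum_range_add, pow_add, mul_sum]

theorem qrise_add (m a b : ℕ) : qrise m (a + b) = qrise m a * qrise (m + a) b := by
  simp [qrise, prod_range_add, add_assoc]

theorem qrise_succ_left (m n : ℕ) : qrise m (n + 1) = qint (m + 1) * qrise (m + 1) n := by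
  rw [add_comm n 1, qrise_add]
  simp [qrise]

theorem sum_qrise (m n : ℕ) :
    qint (n + 1) * ∑ i ∈ range (m + 1), X ^ i * qrise i n = qrise m (n + 1) := by
  induction m with
  | zero =>
    have : qrise 0 (n + 1) = qrise 0 n * qint (n + 1) := by
      simp [qrise, prod_range_succ]
    simp [this, mul_comm]
  | succ m ih =>
    have h1 : qrise (m + 1) (n + 1) = qrise (m + 1) n * qint (m + 1 + (n + 1)) := by
      simp [qrise, prod_range_succ, add_assoc]
    rw [sum_range_succ, mul_add, ih, qrise_succ_left, h1, qint_add (m + 1)]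
    ring

section lin

variable {R : Type*} [CommRing R] {M : Type*} [AddCommGroup M] [Module R M]

/-- The linear extension of `X ^ i ↦ g i`. -/
def lin (g : ℕ → M) : R[X] →ₗ[R] M :=
  Polynomial.lsum fun i => LinearMap.toSpanSingleton R M (g i)

theorem lin_monomial (g : ℕ → M) (i : ℕ) (c : R) : lin g (monomial i c) = c • g i := by
  simp [lin]

theorem lin_X_pow (g : ℕ → M) (i : ℕ) : lin (R := R) g (X ^ i) = g i := by
  rw [X_pow_eq_monomial, lin_monomial, one_smul]

theorem lin_unique (f : R[X] →ₗ[R] M) (g : ℕ → M) (h : ∀ i, f (X ^ i) = g i) :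
    lin g = f := by
  ext i
  simp only [LinearMap.comp_apply, lin_monomial, one_smul]
  rw [← h, X_pow_eq_monomial]

theorem smul_eq_C_C_mul (c : R) (f : R[X][X]) : c • f = C (C c) * f := by
  rw [← smul_one_smul R[X] c f, smul_eq_C_mul, smul_eq_C_mul, mul_one]

/-- The linear extension of `a ^ e * z ^ b ↦ G e b` to polynomials in two variables. -/
def lin₂ (G : ℕ → ℕ → R) : R[X][X] →ₗ[R] R :=
  Polynomial.lsum fun b => lin fun e => G e b

theorem lin₂_C_mul_X_pow (G : ℕ → ℕ → R) (A : R[X]) (b : ℕ) :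
    lin₂ G (C A * X ^ b) = lin (fun e => G e b) A := by
  rw [C_mul_X_pow_eq_monomial]
  simp [lin₂]

theorem lin₂_C_mul_map_C (G : ℕ → ℕ → R) (A B : R[X]) :
    lin₂ G (C A * B.map C) = lin (fun e => lin (fun b => G e b) B) A := by
  induction B using Polynomial.induction_on' with
  | add p r hp hr =>
    rw [Polynomial.map_add, mul_add, map_add, hp, hr]
    simp only [map_add]
    exact (LinearMap.congr_fun (lin_unique (lin (fun e => lin (fun b => G e b) p) +
      lin (fun e => lin (fun b => G e b) r))
      (fun e => lin (fun b => G e b) p + lin (fun b => G e b) r) fun i => by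
        simp only [LinearMap.add_apply, lin_X_pow]) A).symm
  | monomial b c =>
    have h1 : C A * (monomial b c).map C = C (c • A) * X ^ b := by
      rw [Polynomial.map_monomial, ← C_mul_X_pow_eq_monomial, smul_eq_C_mul, map_mul]
      ring
    rw [h1, lin₂_C_mul_X_pow, map_smul]
    simp only [lin_monomial]
    exact (LinearMap.congr_fun (lin_unique (c • lin fun e => G e b) (fun e => c • G e b) fun i => by
      simp only [LinearMap.smul_apply, lin_X_pow]) A).symm

/-- The polynomial `∏_{t < s} (1 + q^{i+t+1} x)`. -/
def shiftedProd (q : R) (i s : ℕ) : R[X] := ∏ t ∈ range s, (1 + C (q ^ (i + t + 1)) * X)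

theorem shiftedProd_add (q : R) (i a b : ℕ) :
    shiftedProd q i (a + b) = shiftedProd q i a * shiftedProd q (i + a) b := by
  simp [shiftedProd, prod_range_add, add_assoc]

theorem shiftedProd_succ (q : R) (i s : ℕ) :
    shiftedProd q i (s + 1) = shiftedProd q i s * (1 + C (q ^ (i + s + 1)) * X) :=
  prod_range_succ _ _

theorem shiftedProd_comp (q : R) (i s n : ℕ) :
    (shiftedProd q i s).comp (C (q ^ n) * X) = shiftedProd q (i + n) s := by
  simp only [shiftedProd, Polynomial.prod_comp]
  refine prod_congr rfl fun t _ => ?_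
  rw [add_comp, one_comp, mul_comp, C_comp, X_comp, ← mul_assoc, ← C_mul, ← pow_add,
    show i + t + 1 + n = i + n + t + 1 by ring]

theorem shiftedProd_comp_mul (q : R) (s : ℕ) :
    (shiftedProd q 0 s).comp (C q * X) * (1 + C q * X) = shiftedProd q 0 (s + 1) := by
  have h := shiftedProd_comp q 0 s 1
  rw [pow_one] at h
  rw [h, add_comm s 1, shiftedProd_add, mul_comm]
  simp [shiftedProd]

/-- The image of `x ^ i` when an up step is traversed, as a polynomial in the numbers of tiles
which cross the step (inner variable) and which start after it (outer variable). -/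
def upImage (q : R) (i : ℕ) : R[X][X] :=
  ∑ j ∈ range (i + 1), C (C (q ^ i) * X ^ j) * X ^ (i - j) +
    ∑ j ∈ range i, C (C (q ^ (i - 1)) * X ^ j) * X ^ (i - 1 - j)

theorem upImage_mul (q : R) (i : ℕ) :
    C (C q) * (C X - X) * upImage q i =
      (1 + C (C q) * C X) * (C (C q) * C X) ^ i - (1 + C (C q) * X) * (C (C q) * X) ^ i := by
  have key : ∀ n : ℕ, (∑ j ∈ range n, (C X : R[X][X]) ^ j * X ^ (n - 1 - j)) * (C X - X) =
      (C X : R[X][X]) ^ n - X ^ n := fun n => Commute.geom_sum₂_mul (Commute.all _ _) n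
  have h1 : (∑ j ∈ range (i + 1), C (C (q ^ i) * X ^ j) * X ^ (i - j) : R[X][X]) =
      C (C q) ^ i * ∑ j ∈ range (i + 1), (C X : R[X][X]) ^ j * X ^ (i + 1 - 1 - j) := by
    rw [mul_sum]
    refine sum_congr rfl fun j _ => ?_
    simp only [map_mul, map_pow, Nat.add_sub_cancel, mul_assoc]
  have h2 : (∑ j ∈ range i, C (C (q ^ (i - 1)) * X ^ j) * X ^ (i - 1 - j) : R[X][X]) =
      C (C q) ^ (i - 1) * ∑ j ∈ range i, (C X : R[X][X]) ^ j * X ^ (i - 1 - j) := by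
    rw [mul_sum]
    refine sum_congr rfl fun j _ => ?_
    simp only [map_mul, map_pow, mul_assoc]
  rw [upImage, h1, h2]
  have e1 := key (i + 1)
  have e2 := key i
  rcases i with _ | i
  · simp
    ring
  · simp only [Nat.add_sub_cancel] at e1 e2 ⊢
    linear_combination C (C q) ^ (i + 2) * e1 + C (C q) ^ (i + 1) * e2

theorem lin_upImage_mul (q : R) (f : R[X]) :
    C (C q) * (C X - X) * lin (upImage q) f =
      C (f.comp (C q * X) * (1 + C q * X)) - (f.comp (C q * X) * (1 + C q * X)).map C := by
  induction f using Polynomial.induction_on' with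
  | add p r hp hr =>
    simp only [map_add, mul_add, hp, hr, add_comp, add_mul, Polynomial.map_add]
    ring
  | monomial i c =>
    have h := upImage_mul q i
    rw [lin_monomial, ← C_mul_X_pow_eq_monomial, smul_eq_C_C_mul]
    simp only [mul_comp, C_comp, X_pow_comp, Polynomial.map_mul, Polynomial.map_add,
      Polynomial.map_one, Polynomial.map_C, Polynomial.map_X, Polynomial.map_pow, map_mul,
      map_add, map_one, map_pow]
    linear_combination C (C c) * h

theorem telescope_shiftedProd (q : R) (m : ℕ) :
    (C X - X) * ∑ i ∈ range (m + 1),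
        C (C (q ^ (i + 1))) * (C (shiftedProd q (i + 1) (m - i)) * (shiftedProd q 0 i).map C) =
      C (shiftedProd q 0 (m + 1)) - (shiftedProd q 0 (m + 1)).map C := by
  induction m with
  | zero =>
    simp [shiftedProd]
    ring
  | succ m ih =>
    have hs : ∑ i ∈ range (m + 1),
        C (C (q ^ (i + 1))) *
          (C (shiftedProd q (i + 1) (m + 1 - i)) * (shiftedProd q 0 i).map C) =
        C (1 + C (q ^ (m + 2)) * X) * ∑ i ∈ range (m + 1), C (C (q ^ (i + 1))) *
          (C (shiftedProd q (i + 1) (m - i)) * (shiftedProd q 0 i).map C) := by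
      rw [mul_sum]
      refine sum_congr rfl fun i hi => ?_
      have hi' := mem_range.1 hi
      rw [show m + 1 - i = (m - i) + 1 by omega, shiftedProd_succ,
        show i + 1 + (m - i) + 1 = m + 2 by omega, map_mul]
      ring
    have h0 : shiftedProd q (m + 1 + 1) 0 = 1 := rfl
    rw [sum_range_succ, hs, shiftedProd_succ q 0 (m + 1), Nat.sub_self, h0]
    simp only [map_mul, Polynomial.map_mul, map_add, map_one, Polynomial.map_add,
      Polynomial.map_one, Polynomial.map_C, Polynomial.map_X, zero_add,
      show m + 1 + 1 = m + 2 from rfl]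
    linear_combination (1 + C (C (q ^ (m + 2))) * C X) * ih

theorem lin_upImage_shiftedProd [IsDomain R] {q : R} (hq : q ≠ 0) (m : ℕ) :
    lin (upImage q) (shiftedProd q 0 m) = ∑ i ∈ range (m + 1),
      C (C (q ^ i)) * (C (shiftedProd q (i + 1) (m - i)) * (shiftedProd q 0 i).map C) := by
  have hX : (C X - X : R[X][X]) ≠ 0 := by
    rw [sub_ne_zero]
    exact fun h => X_ne_C _ h.symm
  have hC : C (C q) ≠ 0 := by simpa using hq
  refine mul_left_cancel₀ (mul_ne_zero hC hX) ?_
  rw [lin_upImage_mul, shiftedProd_comp_mul, ← telescope_shiftedProd, mul_sum, mul_sum]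
  refine sum_congr rfl fun i _ => ?_
  simp only [map_pow]
  ring

theorem lin_scaled (q : R) (W : ℕ → R) (S A : R[X]) (n : ℕ) :
    lin (fun e => q ^ (n * e) * lin W (X ^ e * S)) A =
      lin W (A.comp (C (q ^ n) * X) * S) := by
  induction A using Polynomial.induction_on' with
  | add p r hp hr => rw [map_add, hp, hr, ← map_add, add_comp, add_mul]
  | monomial e p =>
    rw [lin_monomial, smul_eq_mul, ← mul_assoc, ← smul_eq_mul (p * _), ← map_smul, monomial_comp,
      smul_eq_C_mul]
    congr 1
    simp only [map_mul, map_pow, mul_pow, pow_mul]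
    ring

theorem lin_shifted_add (q : R) (W : ℕ → R) (e : ℕ) (f : R[X]) :
    lin (fun b => q ^ b * W (e + b) + q ^ (b + 1) * W (e + b + 1)) f =
      lin W (X ^ e * (f.comp (C q * X) * (1 + C q * X))) := by
  induction f using Polynomial.induction_on' with
  | add p r hp hr =>
    rw [map_add, hp, hr, ← map_add, add_comp]
    congr 1
    ring
  | monomial b p =>
    have h : X ^ e * ((monomial b p).comp (C q * X) * (1 + C q * X)) =
        monomial (e + b) (p * q ^ b) + monomial (e + b + 1) (p * q ^ (b + 1)) := by
      rw [monomial_comp]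
      simp only [← C_mul_X_pow_eq_monomial, map_mul, map_pow]
      ring
    rw [h, map_add]
    simp only [lin_monomial, smul_eq_mul]
    ring

end lin

theorem weightSum_up (w : List Bool) (st : List ℕ) (i : ℕ) :
    weightSum (true :: w) (st.headD 0 + i) st = X ^ (st.headD 0) *
      lin₂ (fun e b => weightSum w (st.headD 0 + e + b) ((st.headD 0 + e) :: st))
        (upImage X i) := by
  set c := st.headD 0 with hc
  have hcoef : ∀ (p : ℤ[X]) (e b : ℕ),
      lin₂ (fun e b => weightSum w (c + e + b) ((c + e) :: st)) (C (C p * X ^ e) * X ^ b) =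
        p * weightSum w (c + e + b) ((c + e) :: st) := by
    intro p e b
    rw [lin₂_C_mul_X_pow, C_mul_X_pow_eq_monomial, lin_monomial, smul_eq_mul]
  rw [weightSum, upImage, map_add, map_sum, map_sum, mul_add, mul_sum, mul_sum, ← hc]
  congr 1
  · rw [show Icc c (c + i) = Ico c (c + i + 1) from rfl, sum_Ico_eq_sum_range,
      show c + i + 1 - c = i + 1 by omega]
    refine sum_congr rfl fun e he => ?_
    have := mem_range.1 he
    rw [hcoef, show c + e + (i - e) = c + i by omega, pow_add, mul_assoc]
  · rw [sum_Ico_eq_sum_range, show c + i - c = i by omega]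
    refine sum_congr rfl fun e he => ?_
    have := mem_range.1 he
    rw [hcoef, show c + e + (i - 1 - e) = c + i - 1 by omega,
      show c + i - 1 = c + (i - 1) by omega, pow_add, mul_assoc]

theorem lin_weightSum_down (w : List Bool) (st : List ℕ) (c e s : ℕ) :
    lin (R := ℤ[X]) (fun b => weightSum (false :: w) (c + e + b) ((c + e) :: st))
        (shiftedProd X 0 s) =
      lin (R := ℤ[X]) (fun i => weightSum w (c + i) st) (X ^ e * shiftedProd X 0 (s + 1)) := by
  have h : (fun b => weightSum (false :: w) (c + e + b) ((c + e) :: st)) = fun b =>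
      X ^ b * weightSum w (c + (e + b)) st + X ^ (b + 1) * weightSum w (c + (e + b + 1)) st := by
    funext b
    rw [weightSum, show c + e + b - (c + e) = b by omega,
      show c + e + b + 1 - (c + e) = b + 1 by omega]
    simp only [add_assoc]
  rw [h, lin_shifted_add X (fun i => weightSum w (c + i) st), shiftedProd_comp_mul]

theorem Balanced.chordProd_mul_lin {u : List Bool} (hu : Balanced u) :
    ∀ (m : ℕ) (st : List ℕ) (w : List Bool),
      chordProd u *
          lin (R := ℤ[X]) (fun i => weightSum (u ++ w) (st.headD 0 + i) st) (shiftedProd X 0 m) =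
        qrise m (u.count true) * X ^ (u.count true * st.headD 0) *
          lin (R := ℤ[X]) (fun i => weightSum w (st.headD 0 + i) st)
            (shiftedProd X 0 (m + u.count true)) := by
  induction hu with
  | nil => intro m st w; simp [chordProd, qrise]
  | @node a b ha hb iha ihb =>
    intro m st w
    have hcount : (true :: (a ++ false :: b)).count true = a.count true + 1 + b.count true := by
      simp; ring
    have hword : true :: (a ++ false :: b) ++ w = true :: (a ++ false :: (b ++ w)) := by simp
    rw [ha.chordProd_node, hcount, hword]
    set c := st.headD 0 with hc
    set p := a.count true
    set r := b.count true
    set W : ℕ → ℤ[X] := fun i => weightSum (b ++ w) (c + i) st with hW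
    set G : ℕ → ℕ → ℤ[X] :=
      fun e z => weightSum (a ++ false :: (b ++ w)) (c + e + z) ((c + e) :: st) with hG
    have hstart : lin (R := ℤ[X]) (fun i => weightSum (true :: (a ++ false :: (b ++ w))) (c + i) st)
        (shiftedProd X 0 m) = X ^ c * lin₂ G (lin (R := ℤ[X]) (upImage X) (shiftedProd X 0 m)) := by
      have h := lin_unique ((X ^ c : ℤ[X]) • (lin₂ G ∘ₗ lin (R := ℤ[X]) (upImage X)))
        (fun i => weightSum (true :: (a ++ false :: (b ++ w))) (c + i) st) (fun i => by
          rw [LinearMap.smul_apply, LinearMap.comp_apply, lin_X_pow, smul_eq_mul]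
          exact (weightSum_up _ _ _).symm)
      rw [h, LinearMap.smul_apply, LinearMap.comp_apply, smul_eq_mul]
    have hinner : ∀ i ∈ range (m + 1), chordProd a *
        lin₂ G (C (shiftedProd X (i + 1) (m - i)) * (shiftedProd (X : ℤ[X]) 0 i).map C) =
          qrise i p * X ^ (p * c) * lin (R := ℤ[X]) W (shiftedProd X 0 (m + p + 1)) := by
      intro i hi
      have him := mem_range.1 hi
      have hrow : ∀ e, chordProd a * lin (R := ℤ[X]) (fun z => G e z) (shiftedProd X 0 i) =
          qrise i p * X ^ (p * c) *
            (X ^ (p * e) * lin (R := ℤ[X]) W (X ^ e * shiftedProd (X : ℤ[X]) 0 (i + p + 1))) := by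
        intro e
        have := iha i ((c + e) :: st) (false :: (b ++ w))
        simp only [List.headD_cons] at this
        rw [hG, this, lin_weightSum_down, mul_add, pow_add]
        ring
      rw [lin₂_C_mul_map_C, ← smul_eq_mul, ← LinearMap.smul_apply]
      have h1 := lin_unique
        (chordProd a • lin (R := ℤ[X]) fun e => lin (R := ℤ[X]) (fun z => G e z) (shiftedProd X 0 i))
        (fun e => chordProd a * lin (R := ℤ[X]) (fun z => G e z) (shiftedProd X 0 i)) (fun e => by
          rw [LinearMap.smul_apply, lin_X_pow, smul_eq_mul])
      have h2 := lin_unique ((qrise i p * X ^ (p * c)) •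
          lin (R := ℤ[X]) fun e =>
            X ^ (p * e) * lin (R := ℤ[X]) W (X ^ e * shiftedProd (X : ℤ[X]) 0 (i + p + 1)))
        (fun e => qrise i p * X ^ (p * c) *
            (X ^ (p * e) * lin (R := ℤ[X]) W (X ^ e * shiftedProd (X : ℤ[X]) 0 (i + p + 1)))) (fun e => by
          rw [LinearMap.smul_apply, lin_X_pow, smul_eq_mul])
      rw [← h1, funext hrow, h2, LinearMap.smul_apply, lin_scaled, shiftedProd_comp,
        smul_eq_mul, mul_comm (shiftedProd (X : ℤ[X]) _ (m - i))]
      have h3 := shiftedProd_add (X : ℤ[X]) 0 (i + p + 1) (m - i)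
      rw [zero_add, show i + p + 1 + (m - i) = m + p + 1 by omega] at h3
      rw [h3, show i + 1 + p = i + p + 1 by omega]
    have hmid : qint (p + 1) * chordProd a *
        lin (R := ℤ[X]) (fun i => weightSum (true :: (a ++ false :: (b ++ w))) (c + i) st)
          (shiftedProd X 0 m) =
        qrise m (p + 1) * X ^ ((p + 1) * c) * lin (R := ℤ[X]) W (shiftedProd X 0 (m + p + 1)) := by
      have hterm : ∀ i ∈ range (m + 1), chordProd a * lin₂ G
          (C (C (X ^ i)) * (C (shiftedProd X (i + 1) (m - i)) *
            (shiftedProd (X : ℤ[X]) 0 i).map C)) =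
          X ^ i * qrise i p * (X ^ (p * c) * lin (R := ℤ[X]) W (shiftedProd X 0 (m + p + 1))) := by
        intro i hi
        rw [← smul_eq_C_C_mul, map_smul, smul_eq_mul, mul_left_comm, hinner i hi]
        ring
      rw [hstart, lin_upImage_shiftedProd X_ne_zero, map_sum, mul_left_comm, mul_assoc (qint _),
        mul_sum, sum_congr rfl hterm, ← sum_mul, ← mul_assoc (qint _), sum_qrise]
      ring
    have hb' := ihb (m + p + 1) st w
    rw [← hc, ← hW] at hb'
    rw [mul_right_comm, hmid, qrise_add m (p + 1) r, ← add_assoc m p 1,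
      show m + (p + 1 + r) = m + p + 1 + r by ring, add_mul, pow_add]
    linear_combination qrise m (p + 1) * X ^ ((p + 1) * c) * hb'

/-- The `q`-hook formula for histories along a balanced word. -/
theorem Balanced.weightSum_mul_chordProd {u : List Bool} (hu : Balanced u) :
    weightSum u 0 [] * chordProd u = qfact (u.count true) := by
  have h := hu.chordProd_mul_lin 0 [] []
  simp only [List.append_nil, List.headD_nil, zero_add, mul_zero, pow_zero, mul_one] at h
  have h0 : shiftedProd (X : ℤ[X]) 0 0 = X ^ 0 := by simp [shiftedProd]
  rw [h0, lin_X_pow] at h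
  have h1 : ∀ s : ℤ[X][X], lin (R := ℤ[X]) (fun i => weightSum [] i []) s = s.coeff 0 := by
    intro s
    exact LinearMap.congr_fun (lin_unique (Polynomial.lcoeff ℤ[X] 0) _ fun i => by
      simp [weightSum, coeff_X_pow, eq_comm]) s
  have h2 : ∀ s, (shiftedProd (X : ℤ[X]) 0 s).coeff 0 = 1 := by
    intro s
    simp [coeff_zero_eq_eval_zero, shiftedProd, eval_prod]
  rw [h1, h2, mul_one] at h
  rw [mul_comm, h]
  simp [qrise, qfact]

/-! ### Histories as lists -/

/-- The histories counted by `weightSum`: each step records how many tiles cross it and how many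
tiles lie over the column it leads to. -/
def histories : List Bool → ℕ → List ℕ → Finset (List (ℕ × ℕ))
  | [], k, [] => if k = 0 then {[]} else ∅
  | [], _, _ :: _ => ∅
  | true :: w, k, st =>
      (Icc (st.headD 0) k).biUnion (fun j => (histories w k (j :: st)).image (List.cons (j, k))) ∪
        (Ico (st.headD 0) k).biUnion
          fun j => (histories w (k - 1) (j :: st)).image (List.cons (j, k - 1))
  | false :: w, k, j :: st =>
      (histories w k st).image (List.cons (j, k)) ∪
        (histories w (k + 1) st).image (List.cons (j, k + 1))
  | false :: _, _, [] => ∅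

/-- The weight of a history. -/
def histWeight : List Bool → List (ℕ × ℕ) → ℕ
  | true :: w, (_, k) :: l => k + histWeight w l
  | false :: w, (j, k) :: l => (k - j) + histWeight w l
  | _, _ => 0

theorem cons_mem_histories_true {w : List Bool} {k : ℕ} {st : List ℕ} {j k' : ℕ}
    {l : List (ℕ × ℕ)} :
    (j, k') :: l ∈ histories (true :: w) k st ↔
      st.headD 0 ≤ j ∧ j ≤ k ∧ j ≤ k' ∧ (k' = k ∨ k' + 1 = k) ∧ l ∈ histories w k' (j :: st) := by
  simp only [histories, mem_union, mem_biUnion, mem_image, mem_Icc, mem_Ico, List.cons.injEq,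
    Prod.mk.injEq]
  constructor
  · rintro (⟨a, ha, b, hb, ⟨rfl, rfl⟩, rfl⟩ | ⟨a, ha, b, hb, ⟨rfl, rfl⟩, rfl⟩)
    · exact ⟨ha.1, ha.2, ha.2, Or.inl rfl, hb⟩
    · exact ⟨ha.1, by omega, by omega, Or.inr (by omega), hb⟩
  · rintro ⟨h1, h2, h3, rfl | rfl, h5⟩
    · exact Or.inl ⟨j, ⟨h1, h2⟩, l, h5, ⟨rfl, rfl⟩, rfl⟩
    · exact Or.inr ⟨j, ⟨h1, by omega⟩, l, h5, ⟨rfl, rfl⟩, rfl⟩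

theorem cons_mem_histories_false {w : List Bool} {k : ℕ} {st : List ℕ} {i j k' : ℕ}
    {l : List (ℕ × ℕ)} :
    (j, k') :: l ∈ histories (false :: w) k (i :: st) ↔
      j = i ∧ (k' = k ∨ k' = k + 1) ∧ l ∈ histories w k' st := by
  simp only [histories, mem_union, mem_image, List.cons.injEq, Prod.mk.injEq]
  constructor
  · rintro (⟨b, hb, ⟨rfl, rfl⟩, rfl⟩ | ⟨b, hb, ⟨rfl, rfl⟩, rfl⟩)
    · exact ⟨rfl, Or.inl rfl, hb⟩
    · exact ⟨rfl, Or.inr rfl, hb⟩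
  · rintro ⟨rfl, rfl | rfl, h⟩
    · exact Or.inl ⟨l, h, ⟨rfl, rfl⟩, rfl⟩
    · exact Or.inr ⟨l, h, ⟨rfl, rfl⟩, rfl⟩

theorem length_of_mem_histories : ∀ (w : List Bool) (k : ℕ) (st : List ℕ) (l : List (ℕ × ℕ)),
    l ∈ histories w k st → l.length = w.length := by
  intro w
  induction w with
  | nil =>
    rintro k (_ | _) l h
    · by_cases hk : k = 0 <;> simp_all [histories]
    · simp [histories] at h
  | cons b w ih =>
    rintro k st l h
    rcases b with _ | _
    · rcases st with _ | ⟨i, st⟩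
      · simp [histories] at h
      · simp only [histories, mem_union, mem_image] at h
        rcases h with ⟨l', h, rfl⟩ | ⟨l', h, rfl⟩ <;> simp [ih _ _ _ h]
    · simp only [histories, mem_union, mem_image, mem_biUnion] at h
      rcases h with ⟨_, _, l', h, rfl⟩ | ⟨_, _, l', h, rfl⟩ <;> simp [ih _ _ _ h]

theorem weightSum_eq_sum_histories : ∀ (w : List Bool) (k : ℕ) (st : List ℕ),
    weightSum w k st = ∑ l ∈ histories w k st, X ^ histWeight w l := by
  have himage : ∀ (s : Finset (List (ℕ × ℕ))) (a : ℕ × ℕ) (F : List (ℕ × ℕ) → ℤ[X]),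
      ∑ l ∈ s.image (List.cons a), F l = ∑ l ∈ s, F (a :: l) := fun s a F =>
    sum_image fun _ _ _ _ h => List.cons_injective h
  intro w
  induction w with
  | nil =>
    rintro k (_ | _)
    · by_cases hk : k = 0 <;> simp [weightSum, histories, histWeight, hk]
    · simp [weightSum, histories]
  | cons b w ih =>
    rintro k st
    rcases b with _ | _
    · rcases st with _ | ⟨i, st⟩
      · simp [weightSum, histories]
      · rw [weightSum, histories, sum_union, himage, himage, ih, ih, mul_sum, mul_sum]
        · simp only [histWeight, pow_add]
        · rw [disjoint_left]
          simp only [mem_image, not_exists, not_and]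
          rintro _ ⟨l, _, rfl⟩ l' _
          simp
    · rw [weightSum, histories, sum_union, sum_biUnion, sum_biUnion]
      · simp only [himage, ih, mul_sum, histWeight, pow_add]
      · intro a _ b _ hab
        rw [Function.onFun, disjoint_left]
        simp only [mem_image, not_exists, not_and]
        rintro _ ⟨l, _, rfl⟩ l' _
        simp [Ne.symm hab]
      · intro a _ b _ hab
        rw [Function.onFun, disjoint_left]
        simp only [mem_image, not_exists, not_and]
        rintro _ ⟨l, _, rfl⟩ l' _
        simp [Ne.symm hab]
      · rw [disjoint_left]
        simp only [mem_image, mem_biUnion, not_exists, not_and, mem_Icc, mem_Ico]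
        rintro _ ⟨j, _, l, _, rfl⟩ j' hj l' _ h
        simp only [List.cons.injEq, Prod.mk.injEq] at h
        omega

theorem pairwise_of_pairwise_cons {k k' j : ℕ} {st : List ℕ}
    (hst : (k :: st).Pairwise (· ≥ ·)) (hj : st.headD 0 ≤ j) (hk : j ≤ k') :
    (k' :: j :: st).Pairwise (· ≥ ·) := by
  rw [List.pairwise_cons] at hst
  have hall : ∀ a ∈ st, a ≤ j := by
    rcases st with _ | ⟨b, st⟩
    · simp
    · intro a ha
      have h2 := hst.2
      rw [List.pairwise_cons] at h2
      simp only [List.headD_cons] at hj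
      rcases List.mem_cons.1 ha with rfl | ha
      · exact hj
      · exact (h2.1 a ha).trans hj
  refine List.pairwise_cons.2 ⟨?_, List.pairwise_cons.2 ⟨hall, hst.2⟩⟩
  intro a ha
  rcases List.mem_cons.1 ha with rfl | ha
  · exact hk
  · exact (hall a ha).trans hk

theorem pairwise_tail {k k' j : ℕ} {st : List ℕ} (hst : (k :: j :: st).Pairwise (· ≥ ·))
    (hk : k ≤ k') : (k' :: st).Pairwise (· ≥ ·) := by
  rw [List.pairwise_cons, List.pairwise_cons] at hst
  exact List.pairwise_cons.2 ⟨fun a ha => (hst.1 a (by simp [ha])).trans hk, hst.2.2⟩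

theorem two_mul_histWeight : ∀ (w : List Bool) (k : ℕ) (st : List ℕ) (l : List (ℕ × ℕ)),
    l ∈ histories w k st → (k :: st).Pairwise (· ≥ ·) →
      2 * histWeight w l + (l.map Prod.fst).sum + st.sum = 2 * (l.map Prod.snd).sum := by
  intro w
  induction w with
  | nil =>
    rintro k (_ | _) l h _
    · by_cases hk : k = 0 <;> simp_all [histories, histWeight]
    · simp [histories] at h
  | cons b w ih =>
    rintro k st l h hst
    obtain ⟨⟨j, k'⟩, l, rfl⟩ := List.exists_cons_of_length_eq_add_one
      (length_of_mem_histories _ _ _ _ h)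
    rcases b with _ | _
    · rcases st with _ | ⟨i, st⟩
      · simp [histories] at h
      · obtain ⟨rfl, hk, h⟩ := cons_mem_histories_false.1 h
        have hkk : k ≤ k' := by omega
        have hjk : j ≤ k := (List.pairwise_cons.1 hst).1 j (by simp)
        have := ih _ _ _ h (pairwise_tail hst hkk)
        simp only [histWeight, List.map_cons, List.sum_cons]
        omega
    · obtain ⟨h1, _, h3, _, h⟩ := cons_mem_histories_true.1 h
      have := ih _ _ _ h (pairwise_of_pairwise_cons hst h1 h3)
      simp only [histWeight, List.map_cons, List.sum_cons] at this ⊢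
      omega

/-! ### Histories as functions on columns -/

/-- The list `f x, f (x + 1), …, f (x + r - 1)`. -/
def sample {α : Type*} (f : ℤ → α) (r : ℕ) (x : ℤ) : List α :=
  (List.range r).map fun i : ℕ => f (x + i)

theorem sample_succ {α : Type*} (f : ℤ → α) (r : ℕ) (x : ℤ) :
    sample f (r + 1) x = f x :: sample f r (x + 1) := by
  simp only [sample, List.range_succ_eq_map, List.map_cons, List.map_map, Nat.cast_zero, add_zero]
  congr 1
  refine List.map_congr_left fun i _ => ?_
  simp only [Function.comp_apply, Nat.cast_succ]
  congr 1
  ring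

theorem sum_sample (f : ℤ → ℕ) (r : ℕ) (x : ℤ) :
    (sample f r x).sum = ∑ y ∈ Ico x (x + r), f y := by
  induction r generalizing x with
  | zero => simp [sample]
  | succ r ih =>
    have hx : x < x + ((r + 1 : ℕ) : ℤ) := by omega
    rw [sample_succ, List.sum_cons, ih, ← Finset.insert_Ico_add_one_left_eq_Ico hx,
      sum_insert (by simp), show x + ((r + 1 : ℕ) : ℤ) = x + 1 + r by push_cast; ring]

/-- The word of steps of a height function. -/
def stepWord (h : ℤ → ℤ) (r : ℕ) (x : ℤ) : List Bool :=
  sample (fun y => decide (h y < h (y + 1))) r x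

/-- The history recorded by the numbers `k` of tiles over columns and `j` of tiles crossing
steps. -/
def record (k j : ℤ → ℕ) (r : ℕ) (x : ℤ) : List (ℕ × ℕ) := sample (fun y => (j y, k (y + 1))) r x

/-- The conditions on the tile counts `k` over columns and `j` across steps, between columns `x`
and `N`. -/
structure IsHistory (h : ℤ → ℤ) (k j : ℤ → ℕ) (x N : ℤ) : Prop where
  last : k N = 0
  up : ∀ y, x ≤ y → y < N → h (y + 1) = h y + 1 → k (y + 1) = k y ∨ k (y + 1) + 1 = k y
  down : ∀ y, x ≤ y → y < N → h (y + 1) = h y - 1 → k (y + 1) = k y ∨ k (y + 1) = k y + 1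
  le_left : ∀ y, x ≤ y → y < N → j y ≤ k y
  le_right : ∀ y, x ≤ y → y < N → j y ≤ k (y + 1)
  opening : ∀ p q, x ≤ p → p ≤ q → q < N → h (p + 1) = h p + 1 →
    (∀ y, p < y → y ≤ q → h p < h y) → j p ≤ j q
  closing : ∀ p q, x ≤ p → p ≤ q → q < N → h (p + 1) = h p + 1 →
    (∀ y, p < y → y ≤ q → h p < h y) → h (q + 1) = h p → j q ≤ j p

/-- Compatibility of the crossings to the right of column `x` with the stack of open up steps. -/
def StackCompat (h : ℤ → ℤ) (j : ℤ → ℕ) (x N : ℤ) (st : List ℕ) : Prop :=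
  ∀ d v : ℕ, st[d]? = some v → ∀ q, x ≤ q → q < N → (∀ y, x ≤ y → y ≤ q → h x - 1 - d < h y) →
    v ≤ j q ∧ (h (q + 1) = h x - 1 - d → j q ≤ v)

theorem isHistory_up_iff {h : ℤ → ℤ} {k j : ℤ → ℕ} {x N : ℤ} {st : List ℕ} (hxN : x < N)
    (hx : h (x + 1) = h x + 1) (hst : (k x :: st).Pairwise (· ≥ ·)) :
    IsHistory h k j x N ∧ StackCompat h j x N st ↔
      st.headD 0 ≤ j x ∧ j x ≤ k x ∧ j x ≤ k (x + 1) ∧ (k (x + 1) = k x ∨ k (x + 1) + 1 = k x) ∧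
        IsHistory h k j (x + 1) N ∧ StackCompat h j (x + 1) N (j x :: st) := by
  constructor
  · rintro ⟨H, S⟩
    refine ⟨?_, H.le_left x le_rfl hxN, H.le_right x le_rfl hxN, H.up x le_rfl hxN hx,
      ⟨H.last, fun y hy => H.up y (by omega), fun y hy => H.down y (by omega),
      fun y hy => H.le_left y (by omega), fun y hy => H.le_right y (by omega),
      fun p q hp => H.opening p q (by omega), fun p q hp => H.closing p q (by omega)⟩, ?_⟩
    · rcases st with _ | ⟨v, st⟩
      · simp
      · refine (S 0 v (by simp) x le_rfl hxN fun y h1 h2 => ?_).1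
        obtain rfl : y = x := by omega
        simp
    · intro d v hv q hq hqN hy
      rcases d with _ | d
      · obtain rfl : j x = v := by simpa using hv
        have hy' : ∀ y, x < y → y ≤ q → h x < h y := fun y h1 h2 => by
          have := hy y (by omega) h2
          simp only [Nat.cast_zero] at this
          omega
        refine ⟨H.opening x q le_rfl (by omega) hqN hx hy', fun h0 =>
          H.closing x q le_rfl (by omega) hqN hx hy' ?_⟩
        simp only [Nat.cast_zero] at h0
        omega
      · have hv' : st[d]? = some v := by simpa using hv
        have := S d v hv' q (by omega) hqN fun y h1 h2 => by
          rcases h1.eq_or_lt with rfl | h1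
          · omega
          · have := hy y (by omega) h2
            push_cast at this
            omega
        refine ⟨this.1, fun h0 => this.2 ?_⟩
        push_cast at h0
        omega
  · rintro ⟨h1, h2, h3, h4, H, S⟩
    have S0 : ∀ q, x + 1 ≤ q → q < N → (∀ y, x < y → y ≤ q → h x < h y) →
        j x ≤ j q ∧ (h (q + 1) = h x → j q ≤ j x) := by
      intro q hq hqN hy
      have := S 0 (j x) (by simp) q hq hqN fun y hy1 hy2 => by
        have := hy y (by omega) hy2
        simp only [Nat.cast_zero]
        omega
      refine ⟨this.1, fun h0 => this.2 ?_⟩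
      simp only [Nat.cast_zero]
      omega
    refine ⟨⟨H.last, fun y hy hyN hs => ?_, fun y hy hyN hs => ?_, fun y hy hyN => ?_,
      fun y hy hyN => ?_, fun p q hp hpq hqN hs hy => ?_, fun p q hp hpq hqN hs hy h0 => ?_⟩, ?_⟩
    · rcases hy.eq_or_lt with rfl | hy
      · exact h4
      · exact H.up y (by omega) hyN hs
    · rcases hy.eq_or_lt with rfl | hy
      · omega
      · exact H.down y (by omega) hyN hs
    · rcases hy.eq_or_lt with rfl | hy
      · exact h2
      · exact H.le_left y (by omega) hyN
    · rcases hy.eq_or_lt with rfl | hy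
      · exact h3
      · exact H.le_right y (by omega) hyN
    · rcases hp.eq_or_lt with rfl | hp
      · rcases hpq.eq_or_lt with rfl | hpq
        · exact le_rfl
        · exact (S0 q (by omega) hqN hy).1
      · exact H.opening p q (by omega) hpq hqN hs hy
    · rcases hp.eq_or_lt with rfl | hp
      · rcases hpq.eq_or_lt with rfl | hpq
        · exact le_rfl
        · exact (S0 q (by omega) hqN hy).2 h0
      · exact H.closing p q (by omega) hpq hqN hs hy h0
    · intro d v hv q hq hqN hy
      rcases hq.eq_or_lt with rfl | hq
      · have hsort := (List.pairwise_cons.1 (pairwise_of_pairwise_cons hst h1 h3)).2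
        exact ⟨(List.pairwise_cons.1 hsort).1 v (List.mem_of_getElem? hv), fun h0 => by omega⟩
      · have := S (d + 1) v (by simpa using hv) q (by omega) hqN fun y hy1 hy2 => by
          have := hy y (by omega) hy2
          push_cast
          omega
        refine ⟨this.1, fun h0 => this.2 ?_⟩
        push_cast
        omega

theorem isHistory_down_iff {h : ℤ → ℤ} {k j : ℤ → ℕ} {x N : ℤ} {v : ℕ} {st : List ℕ} (hxN : x < N)
    (hx : h (x + 1) = h x - 1) (hst : (k x :: v :: st).Pairwise (· ≥ ·)) :
    IsHistory h k j x N ∧ StackCompat h j x N (v :: st) ↔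
      j x = v ∧ (k (x + 1) = k x ∨ k (x + 1) = k x + 1) ∧
        IsHistory h k j (x + 1) N ∧ StackCompat h j (x + 1) N st := by
  rw [List.pairwise_cons, List.pairwise_cons] at hst
  constructor
  · rintro ⟨H, S⟩
    have hv := S 0 v (by simp) x le_rfl hxN fun y h1 h2 => by
      obtain rfl : y = x := by omega
      simp
    refine ⟨le_antisymm (hv.2 (by simpa using hx)) hv.1, H.down x le_rfl hxN hx,
      ⟨H.last, fun y hy => H.up y (by omega), fun y hy => H.down y (by omega),
      fun y hy => H.le_left y (by omega), fun y hy => H.le_right y (by omega),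
      fun p q hp => H.opening p q (by omega), fun p q hp => H.closing p q (by omega)⟩, ?_⟩
    intro d u hu q hq hqN hy
    have := S (d + 1) u (by simpa using hu) q (by omega) hqN fun y h1 h2 => by
      push_cast
      rcases h1.eq_or_lt with rfl | h1
      · omega
      · have := hy y (by omega) h2
        omega
    refine ⟨this.1, fun h0 => this.2 ?_⟩
    push_cast
    omega
  · rintro ⟨rfl, h4, H, S⟩
    have hk : j x ≤ k x := hst.1 _ (by simp)
    refine ⟨⟨H.last, fun y hy hyN hs => ?_, fun y hy hyN hs => ?_, fun y hy hyN => ?_,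
      fun y hy hyN => ?_, fun p q hp hpq hqN hs hy => ?_, fun p q hp hpq hqN hs hy h0 => ?_⟩, ?_⟩
    · rcases hy.eq_or_lt with rfl | hy
      · omega
      · exact H.up y (by omega) hyN hs
    · rcases hy.eq_or_lt with rfl | hy
      · exact h4
      · exact H.down y (by omega) hyN hs
    · rcases hy.eq_or_lt with rfl | hy
      · exact hk
      · exact H.le_left y (by omega) hyN
    · rcases hy.eq_or_lt with rfl | hy
      · omega
      · exact H.le_right y (by omega) hyN
    · rcases hp.eq_or_lt with rfl | hp
      · omega
      · exact H.opening p q (by omega) hpq hqN hs hy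
    · rcases hp.eq_or_lt with rfl | hp
      · omega
      · exact H.closing p q (by omega) hpq hqN hs hy h0
    · intro d u hu q hq hqN hy
      rcases hq.eq_or_lt with rfl | hq
      · rcases d with _ | d
        · obtain rfl : j x = u := by simpa using hu
          simp
        · have hu' : st[d]? = some u := by simpa using hu
          refine ⟨hst.2.1 u (List.mem_of_getElem? hu'), fun h0 => ?_⟩
          push_cast at h0
          omega
      · have hx1 := hy (x + 1) (by omega) (by omega)
        rcases d with _ | d
        · simp only [Nat.cast_zero] at hx1
          omega
        · have := S d u (by simpa using hu) q (by omega) hqN fun y hy1 hy2 => by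
            have := hy y (by omega) hy2
            push_cast at this
            omega
          refine ⟨this.1, fun h0 => this.2 ?_⟩
          push_cast at h0
          omega

theorem record_mem_histories_iff {h : ℤ → ℤ} {N : ℤ} (hstep : ∀ x, x < N →
      -N ≤ x → h (x + 1) = h x + 1 ∨ h (x + 1) = h x - 1)
    (hnonneg : ∀ x, 0 ≤ h x) (hN : h N = 0) (k j : ℤ → ℕ) :
    ∀ (r : ℕ) (x : ℤ) (st : List ℕ), x + r = N → -N ≤ x → (st.length : ℤ) = h x →
      (k x :: st).Pairwise (· ≥ ·) →
      (record k j r x ∈ histories (stepWord h r x) (k x) st ↔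
        IsHistory h k j x N ∧ StackCompat h j x N st) := by
  intro r
  induction r with
  | zero =>
    intro x st hx _ hlen _
    obtain rfl : x = N := by simpa using hx
    obtain rfl : st = [] := List.length_eq_zero_iff.1 (by omega)
    constructor
    · intro hm
      have hk : k x = 0 := by
        by_contra hk
        simp [record, sample, stepWord, histories, hk] at hm
      refine ⟨⟨hk, ?_, ?_, ?_, ?_, ?_, ?_⟩, ?_⟩
      iterate 4 intros; omega
      iterate 2 intros; omega
      intro d v hv
      simp at hv
    · rintro ⟨H, _⟩
      simp [record, sample, stepWord, histories, H.last]
  | succ r ih =>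
    intro x st hx hxN hlen hst
    push_cast at hx
    have hlt : x < N := by omega
    have ih' := ih (x + 1)
    rw [record, stepWord, sample_succ, sample_succ, ← record, ← stepWord]
    rcases hstep x hlt hxN with hs | hs
    · rw [decide_eq_true (by omega), cons_mem_histories_true, isHistory_up_iff hlt hs hst]
      constructor
      · rintro ⟨h1, h2, h3, h4, h5⟩
        exact ⟨h1, h2, h3, h4, (ih' _ (by omega) (by omega) (by simp; omega)
          (pairwise_of_pairwise_cons hst h1 h3)).1 h5⟩
      · rintro ⟨h1, h2, h3, h4, h5⟩
        exact ⟨h1, h2, h3, h4, (ih' _ (by omega) (by omega) (by simp; omega)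
          (pairwise_of_pairwise_cons hst h1 h3)).2 h5⟩
    · have := hnonneg (x + 1)
      rcases st with _ | ⟨v, st⟩
      · simp at hlen
        omega
      simp only [List.length_cons, Nat.cast_succ] at hlen
      rw [decide_eq_false (by omega), cons_mem_histories_false, isHistory_down_iff hlt hs hst]
      constructor
      · rintro ⟨h1, h2, h3⟩
        exact ⟨h1, h2, (ih' _ (by omega) (by omega) (by omega)
          (pairwise_tail hst (by omega))).1 h3⟩
      · rintro ⟨h1, h2, h3⟩
        exact ⟨h1, h2, (ih' _ (by omega) (by omega) (by omega)
          (pairwise_tail hst (by omega))).2 h3⟩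

theorem record_mem_histories {h : ℤ → ℤ} {n : ℕ} (hstep : ∀ x, x < (n : ℤ) →
      -(n : ℤ) ≤ x → h (x + 1) = h x + 1 ∨ h (x + 1) = h x - 1)
    (hnonneg : ∀ x, 0 ≤ h x) (hn : h n = 0) (hn' : h (-n) = 0) {k : ℤ → ℕ} (j : ℤ → ℕ)
    (hk : k (-n) = 0) :
    record k j (2 * n) (-n) ∈ histories (stepWord h (2 * n) (-n)) 0 [] ↔
      IsHistory h k j (-n) n := by
  have := record_mem_histories_iff hstep hnonneg hn k j (2 * n) (-n) [] (by push_cast; ring) le_rfl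
    (by simp [hn']) (by simp)
  rw [hk] at this
  rw [this]
  exact ⟨fun h => h.1, fun h => ⟨h, fun d v hv => by simp at hv⟩⟩

theorem exists_record_eq (l : List (ℕ × ℕ)) (x : ℤ) :
    ∃ k j : ℤ → ℕ, (∀ y, y ≤ x ∨ x + l.length < y → k y = 0) ∧
      (∀ y, y < x ∨ x + l.length ≤ y → j y = 0) ∧ record k j l.length x = l := by
  refine ⟨fun y => if y ≤ x then 0 else (l[(y - x - 1).toNat]?.getD (0, 0)).2,
    fun y => if y < x then 0 else (l[(y - x).toNat]?.getD (0, 0)).1, fun y hy => ?_,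
    fun y hy => ?_, ?_⟩
  · dsimp only
    split_ifs with h
    · rfl
    · rw [List.getElem?_eq_none (by omega)]
      rfl
  · dsimp only
    split_ifs with h
    · rfl
    · rw [List.getElem?_eq_none (by omega)]
      rfl
  refine List.ext_getElem (by simp [record, sample]) fun i h1 h2 => ?_
  have h3 : x + i + 1 - x - 1 = i := by ring
  have h4 : x + i - x = i := by ring
  simp only [record, sample, List.getElem_map, List.getElem_range,
    if_neg (show ¬ (x + i + 1 ≤ x) by omega), if_neg (show ¬ (x + i < x) by omega), h3, h4,
    Int.toNat_natCast, List.getElem?_eq_getElem h2, Option.getD_some, Prod.mk.eta]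

theorem record_inj {k j k' j' : ℤ → ℕ} {n : ℕ}
    (h : record k j (2 * n) (-n) = record k' j' (2 * n) (-n)) :
    ∀ x, -(n : ℤ) ≤ x → x < n → j x = j' x ∧ k (x + 1) = k' (x + 1) := by
  intro x hx hxn
  have hi : (x + n).toNat < 2 * n := by omega
  have := congrArg (fun l => l[(x + n).toNat]?) h
  have hc : -(n : ℤ) + ((x + n).toNat : ℤ) = x := by omega
  simpa [record, sample, List.getElem?_range hi, hc,
    max_eq_left (show 0 ≤ x + n by omega)] using this

/-! ### Height functions of Dyck paths -/

/-- The height above column `x` of the path with the given steps. -/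
def stepHeight {n : ℕ} (s : Fin (2 * n) → Bool) (x : ℤ) : ℤ :=
  ((univ.filter fun i : Fin (2 * n) => ((i : ℕ) : ℤ) < x + n ∧ s i = true).card : ℤ) -
    ((univ.filter fun i : Fin (2 * n) => ((i : ℕ) : ℤ) < x + n ∧ s i = false).card : ℤ)

theorem stepHeight_eq_sum {n : ℕ} (s : Fin (2 * n) → Bool) (x : ℤ) :
    stepHeight s x = 
      ∑ i ∈ univ.filter (fun i : Fin (2 * n) => ((i : ℕ) : ℤ) < x + n),
        if s i = true then 1 else -1 := by
  rw [stepHeight, ← filter_filter, ← filter_filter, sum_ite, sum_const, sum_const]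
  simp [sub_eq_add_neg]

theorem stepHeight_add_one {n : ℕ} (s : Fin (2 * n) → Bool) {x : ℤ} (hx : -(n : ℤ) ≤ x)
    (hxn : x < n) : stepHeight s (x + 1) = stepHeight s x +
      if s ⟨(x + n).toNat, by omega⟩ = true then 1 else -1 := by
  rw [stepHeight_eq_sum, stepHeight_eq_sum]
  have : (univ.filter fun i : Fin (2 * n) => ((i : ℕ) : ℤ) < x + 1 + n) =
      insert ⟨(x + n).toNat, by omega⟩
        (univ.filter fun i : Fin (2 * n) => ((i : ℕ) : ℤ) < x + n) := by
    ext i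
    simp only [mem_filter, mem_univ, true_and, mem_insert, Fin.ext_iff]
    omega
  rw [this, sum_insert (by simp), add_comm]

theorem stepHeight_of_le {n : ℕ} (s : Fin (2 * n) → Bool) {x : ℤ} (hx : x ≤ -n) :
    stepHeight s x = 0 := by
  rw [stepHeight_eq_sum, filter_false_of_mem fun i _ => by omega, sum_empty]

theorem stepHeight_eq_of_ge {n : ℕ} (s : Fin (2 * n) → Bool) {x : ℤ} (hx : n ≤ x) :
    stepHeight s x = stepHeight s n := by
  rw [stepHeight_eq_sum, stepHeight_eq_sum, filter_true_of_mem fun i _ => by have := i.isLt; omega,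
    filter_true_of_mem fun i _ => by have := i.isLt; omega]

theorem card_add_card_false {n : ℕ} (s : Fin (2 * n) → Bool) :
    (univ.filter fun i => s i = true).card + (univ.filter fun i => s i = false).card = 2 * n := by
  have := card_filter_add_card_filter_not (s := (univ : Finset (Fin (2 * n))))
    (fun i => s i = true)
  simpa using this

theorem stepHeight_order {n : ℕ} (s : Fin (2 * n) → Bool) :
    stepHeight s n = 2 * (univ.filter fun i => s i = true).card - 2 * n := by
  have h := card_add_card_false s
  have h1 : ∀ i : Fin (2 * n), ((i : ℕ) : ℤ) < n + n := fun i => by omega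
  simp only [stepHeight, h1, true_and]
  omega

theorem ht_add_one {n : ℕ} (P : DyckPath n) {x : ℤ} (hx : -(n : ℤ) ≤ x) (hxn : x < n) :
    P.ht (x + 1) = P.ht x + if P.step ⟨(x + n).toNat, by omega⟩ = true then 1 else -1 :=
  stepHeight_add_one P.step hx hxn

theorem ht_step {n : ℕ} (P : DyckPath n) {x : ℤ} (hx : -(n : ℤ) ≤ x) (hxn : x < n) :
    P.ht (x + 1) = P.ht x + 1 ∨ P.ht (x + 1) = P.ht x - 1 := by
  rw [ht_add_one P hx hxn]
  split_ifs <;> simp [sub_eq_add_neg]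

theorem ht_of_le {n : ℕ} (P : DyckPath n) {x : ℤ} (hx : x ≤ -n) : P.ht x = 0 :=
  stepHeight_of_le P.step hx

theorem ht_of_ge {n : ℕ} (P : DyckPath n) {x : ℤ} (hx : n ≤ x) : P.ht x = 0 := by
  have h : P.ht x = stepHeight P.step n := stepHeight_eq_of_ge P.step hx
  rw [h, stepHeight_order, P.balanced]
  ring

theorem ht_nonneg {n : ℕ} (P : DyckPath n) (x : ℤ) : 0 ≤ P.ht x := by
  rcases le_or_gt x (-n) with hx | hx
  · rw [ht_of_le P hx]
  rcases le_or_gt (n : ℤ) x with hx' | hx'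
  · rw [ht_of_ge P hx']
  have h := P.nonneg (x + n).toNat (by omega)
  have : ∀ i : Fin (2 * n), (i : ℕ) < (x + n).toNat ↔ ((i : ℕ) : ℤ) < x + n := fun i => by omega
  simp only [this] at h
  rw [DyckPath.ht]
  omega

theorem ht_le {n : ℕ} (P : DyckPath n) (x : ℤ) : P.ht x ≤ n := by
  have h1 : (univ.filter fun i : Fin (2 * n) => ((i : ℕ) : ℤ) < x + n ∧ P.step i = true).card ≤
      (univ.filter fun i => P.step i = true).card :=
    card_le_card fun i hi => by simp_all
  rw [P.balanced] at h1
  rw [DyckPath.ht]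
  omega

theorem ht_parity {n : ℕ} (P : DyckPath n) {x : ℤ} (hx : -(n : ℤ) ≤ x) (hxn : x ≤ n) :
    (P.ht x - x - n) % 2 = 0 := by
  induction x, hx using Int.leInduction with
  | base => simp [ht_of_le P le_rfl]
  | succ x hx ih =>
    have := ih (by omega)
    rcases ht_step P hx (by omega) with h | h <;> omega

theorem dyckPath_ext {n : ℕ} {P Q : DyckPath n} (h : ∀ x, P.ht x = Q.ht x) : P = Q := by
  have hs : P.step = Q.step := by
    funext i
    have h1 := ht_add_one P (x := (i : ℕ) - n) (by omega) (by omega)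
    have h2 := ht_add_one Q (x := (i : ℕ) - n) (by omega) (by omega)
    rw [h, h, h2] at h1
    simp only [sub_add_cancel, Int.toNat_natCast, Fin.eta] at h1
    cases hP : P.step i <;> cases hQ : Q.step i <;> simp_all
  cases P
  cases Q
  simp_all

theorem exists_dyckPath {n : ℕ} {f : ℤ → ℤ} (h0 : f (-n) = 0) (h1 : f n = 0)
    (hnonneg : ∀ x, 0 ≤ f x)
    (hstep : ∀ x, -(n : ℤ) ≤ x → x < n → f (x + 1) = f x + 1 ∨ f (x + 1) = f x - 1) :
    ∃ P : DyckPath n, ∀ x, -(n : ℤ) ≤ x → x ≤ n → P.ht x = f x := by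
  set s : Fin (2 * n) → Bool := fun i => decide (f ((i : ℕ) - n) < f ((i : ℕ) - n + 1)) with hs
  have key : ∀ x, -(n : ℤ) ≤ x → x ≤ n → stepHeight s x = f x := by
    intro x hx
    induction x, hx using Int.leInduction with
    | base => intro _; rw [h0, stepHeight_of_le s le_rfl]
    | succ x hx ih =>
      intro hxn
      rw [stepHeight_add_one s hx (by omega), ih (by omega)]
      have hc : ((x + n).toNat : ℤ) - n = x := by omega
      simp only [hs, hc, decide_eq_true_eq]
      rcases hstep x hx (by omega) with h | h <;> split_ifs <;> omega
  refine ⟨⟨s, ?_, fun k hk => ?_⟩, key⟩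
  · have := key n (by omega) le_rfl
    rw [h1, stepHeight_order] at this
    omega
  · have h2 := key (k - n) (by omega) (by omega)
    have h3 := hnonneg (k - n)
    rw [← h2, stepHeight] at h3
    simp only [sub_add_cancel, Nat.cast_lt] at h3
    omega

/-! ### Chords -/

theorem step_eq_true_iff {n : ℕ} (P : DyckPath n) (i : Fin (2 * n)) :
    P.step i = true ↔ P.ht ((i : ℕ) - n) < P.ht ((i : ℕ) - n + 1) := by
  rw [ht_add_one P (x := (i : ℕ) - n) (by omega) (by omega)]
  simp only [sub_add_cancel, Int.toNat_natCast, Fin.eta]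
  split_ifs with h <;> simp [h]

theorem stepWord_succ (h : ℤ → ℤ) (r : ℕ) (x : ℤ) :
    stepWord h (r + 1) x = decide (h x < h (x + 1)) :: stepWord h r (x + 1) :=
  sample_succ _ _ _

section stepWord

variable {h : ℤ → ℤ} {a N : ℤ}

theorem descendsFrom_stepWord
    (hstep : ∀ x, a ≤ x → x < N → h (x + 1) = h x + 1 ∨ h (x + 1) = h x - 1)
    (hnonneg : ∀ x, 0 ≤ h x) (hN : h N = 0) (r : ℕ) :
    ∀ x, a ≤ x → x + r = N → DescendsFrom (h x).toNat (stepWord h r x) := by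
  induction r with
  | zero =>
    intro x _ hx
    obtain rfl : x = N := by simpa using hx
    simp [stepWord, sample, DescendsFrom, hN]
  | succ r ih =>
    intro x hax hx
    push_cast at hx
    have h1 := ih (x + 1) (by omega) (by omega)
    have h2 := hnonneg x
    have h3 := hnonneg (x + 1)
    rw [stepWord_succ]
    rcases hstep x hax (by omega) with hs | hs
    · rw [decide_eq_true (by omega), DescendsFrom]
      rwa [hs, show (h x + 1).toNat = (h x).toNat + 1 by omega] at h1
    · rw [decide_eq_false (by omega), show (h x).toNat = (h (x + 1)).toNat + 1 by omega]
      exact h1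

theorem two_mul_count_stepWord
    (hstep : ∀ x, a ≤ x → x < N → h (x + 1) = h x + 1 ∨ h (x + 1) = h x - 1) (r : ℕ) :
    ∀ x, a ≤ x → x + r ≤ N →
      2 * ((stepWord h r x).count true : ℤ) = r + h (x + r) - h x := by
  induction r with
  | zero => simp [stepWord, sample]
  | succ r ih =>
    intro x hax hx
    push_cast at hx
    have h1 := ih (x + 1) (by omega) (by omega)
    rw [stepWord_succ, List.count_cons]
    rw [show x + 1 + r = x + ((r + 1 : ℕ) : ℤ) by push_cast; ring] at h1
    rcases hstep x hax (by omega) with hs | hs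
    · rw [decide_eq_true (by omega)]
      simp only [beq_self_eq_true, if_true]
      push_cast at h1 ⊢
      omega
    · rw [decide_eq_false (by omega)]
      simp only [Bool.false_eq_true, if_false, beq_iff_eq, add_zero]
      push_cast at h1 ⊢
      omega

theorem upsBeforeReturn_stepWord
    (hstep : ∀ x, a ≤ x → x < N → h (x + 1) = h x + 1 ∨ h (x + 1) = h x - 1) (r : ℕ) :
    ∀ (x q : ℤ) (d : ℕ), a ≤ x → x + r ≤ N → x ≤ q → q < x + r → h (q + 1) = h x - 1 - d →
      (∀ z, x ≤ z → z ≤ q → h x - 1 - d < h z) →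
      upsBeforeReturn d (stepWord h r x) =
        ((Ico x (q + 1)).filter fun z => h z < h (z + 1)).card := by
  induction r with
  | zero =>
    intro x q d _ _ h1 h2
    simp at h2
    omega
  | succ r ih =>
    intro x q d hax hx hxq hq hd hz
    push_cast at hx hq
    rw [stepWord_succ, ← Finset.insert_Ico_add_one_left_eq_Ico (by omega), filter_insert]
    rcases hstep x hax (by omega) with hs | hs
    · have hne : x ≠ q := by
        rintro rfl
        omega
      rw [decide_eq_true (by omega), upsBeforeReturn, if_pos (by omega),
        card_insert_of_notMem (by simp), ih (x + 1) q (d + 1) (by omega) (by omega) (by omega)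
          (by omega) (by push_cast; omega)]
      intro z h1 h2
      have := hz z (by omega) h2
      push_cast
      omega
    · rw [decide_eq_false (by omega), if_neg (by omega)]
      rcases d with _ | d
      · obtain rfl : x = q := by
          by_contra hne
          have := hz (x + 1) (by omega) (by omega)
          simp only [Nat.cast_zero] at this
          omega
        simp [upsBeforeReturn]
      · push_cast at hd hz
        have hne : x ≠ q := by
          rintro rfl
          omega
        rw [upsBeforeReturn, ih (x + 1) q d (by omega) (by omega) (by omega)
          (by omega) (by omega)]
        intro z h1 h2
        have := hz z (by omega) h2
        omega

theorem chordProd_stepWord (r : ℕ) :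
    ∀ x, x + r = N → chordProd (stepWord h r x) =
      ∏ y ∈ (Ico x N).filter (fun y => h y < h (y + 1)),
        qint (upsBeforeReturn 0 (stepWord h (N - (y + 1)).toNat (y + 1)) + 1) := by
  induction r with
  | zero =>
    intro x hx
    obtain rfl : x = N := by simpa using hx
    simp [stepWord, sample, chordProd]
  | succ r ih =>
    intro x hx
    push_cast at hx
    rw [stepWord_succ, ← Finset.insert_Ico_add_one_left_eq_Ico (by omega), filter_insert]
    have hr : (N - (x + 1)).toNat = r := by omega
    by_cases hs : h x < h (x + 1)
    · rw [decide_eq_true hs, if_pos hs, prod_insert (by simp), chordProd, ih _ (by omega), hr]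
    · rw [decide_eq_false hs, if_neg hs, chordProd, ih _ (by omega)]

end stepWord

theorem chordLen_eq {n : ℕ} {P : DyckPath n} (C : ChordLabeling P) (i : Fin n) :
    chordLen C i = upsBeforeReturn 0 (stepWord P.ht ((n : ℤ) - ((C.l i : ℤ) - n + 1)).toNat
      ((C.l i : ℤ) - n + 1)) + 1 := by
  obtain ⟨hlr, hr, ⟨hp, hpt⟩, _, hpq, hz⟩ := C.chord i
  simp only [DyckPath.pt] at hpq hz
  have hup := (step_eq_true_iff P ⟨C.l i, hp⟩).1 hpt
  simp only at hup
  have hs := ht_step P (x := (C.l i : ℤ) - n) (by omega) (by omega)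
  have hs' : P.ht ((C.l i : ℤ) - n + 1) = P.ht ((C.l i : ℤ) - n) + 1 := by omega
  have hc : ((n : ℤ) - (C.l i - n + 1)).toNat = n - ((C.l i : ℤ) - n + 1) := by omega
  have hq : ((C.r i : ℤ) - n) + 1 = ((C.r i + 1 : ℕ) : ℤ) - n := by push_cast; ring
  rw [upsBeforeReturn_stepWord (h := P.ht) (fun x h1 h2 => ht_step P h1 h2) _ _
    ((C.r i : ℤ) - n) 0 (by omega) (by omega) (by omega) (by omega)
    (by rw [hq, hpq, hs']; simp)]
  · have hins : insert ((C.l i : ℤ) - n) ((Ico ((C.l i : ℤ) - n + 1) (C.r i - n + 1)).filter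
        fun z => P.ht z < P.ht (z + 1)) =
        (Ico ((C.l i : ℤ) - n) (C.r i - n + 1)).filter fun z => P.ht z < P.ht (z + 1) := by
      rw [← Finset.insert_Ico_add_one_left_eq_Ico (a := (C.l i : ℤ) - n) (by omega), filter_insert,
        if_pos hup]
    rw [← card_insert_of_notMem (a := (C.l i : ℤ) - n) (by simp), hins, chordLen]
    refine card_bij (fun m _ => ((m : ℕ) : ℤ) - n) (fun m hm => ?_) (fun m _ m' _ h => ?_)
      fun z hz => ?_
    · simp only [mem_filter, mem_univ, true_and, step_eq_true_iff] at hm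
      simp only [mem_filter, mem_Ico]
      exact ⟨by omega, hm.2.2⟩
    · ext
      omega
    · simp only [mem_filter, mem_Ico] at hz
      have hm : (z + n).toNat < 2 * n := by omega
      have hzc : ((z + n).toNat : ℤ) - n = z := by omega
      refine ⟨⟨(z + n).toNat, hm⟩, ?_, hzc⟩
      simp only [mem_filter, mem_univ, true_and, step_eq_true_iff, hzc]
      exact ⟨by omega, by omega, hz.2⟩
  · intro z h1 h2
    have := hz (z + n).toNat (by omega) (by omega)
    rw [show ((z + n).toNat : ℤ) - n = z by omega] at this
    simp only [Nat.cast_zero]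
    omega

theorem prod_qint_chordLen {n : ℕ} {P : DyckPath n} (C : ChordLabeling P) :
    ∏ i, qint (chordLen C i) = chordProd (stepWord P.ht (2 * n) (-n)) := by
  have himage : (univ.image fun i => (C.l i : ℤ) - n) =
      (Ico (-(n : ℤ)) n).filter fun y => P.ht y < P.ht (y + 1) := by
    refine eq_of_subset_of_card_le ?_ ?_
    · intro y hy
      obtain ⟨i, _, rfl⟩ := mem_image.1 hy
      obtain ⟨hlr, hr, ⟨hp, hpt⟩, _⟩ := C.chord i
      have := (step_eq_true_iff P ⟨C.l i, hp⟩).1 hpt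
      simp only [mem_filter, mem_Ico]
      exact ⟨by omega, this⟩
    · rw [card_image_of_injective _ fun i i' h => C.inj (by simpa using h), card_univ,
        Fintype.card_fin]
      refine le_of_eq_of_le (Eq.symm ?_) P.balanced.le
      refine card_bij (fun m _ => ((m : ℕ) : ℤ) - n) (fun m hm => ?_) (fun m _ m' _ h => ?_)
        fun z hz => ?_
      · simp only [mem_filter, mem_univ, true_and, step_eq_true_iff] at hm
        simp only [mem_filter, mem_Ico]
        exact ⟨by omega, hm⟩
      · ext
        omega
      · simp only [mem_filter, mem_Ico] at hz
        have hm : (z + n).toNat < 2 * n := by omega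
        have hzc : ((z + n).toNat : ℤ) - n = z := by omega
        refine ⟨⟨(z + n).toNat, hm⟩, ?_, hzc⟩
        simp only [mem_filter, mem_univ, true_and, step_eq_true_iff, hzc]
        exact hz.2
  rw [chordProd_stepWord (N := n) (2 * n) (-n) (by push_cast; ring), ← himage,
    prod_image fun i _ i' _ h => C.inj (by simpa using h)]
  exact prod_congr rfl fun i _ => by rw [chordLen_eq]

theorem weightSum_mul_prod_qint {n : ℕ} {P : DyckPath n} (C : ChordLabeling P) :
    weightSum (stepWord P.ht (2 * n) (-n)) 0 [] * ∏ i, qint (chordLen C i) = qfact n := by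
  have hd := descendsFrom_stepWord (h := P.ht) (a := -n) (N := n) (fun x h1 h2 => ht_step P h1 h2)
    (ht_nonneg P) (ht_of_ge P le_rfl) (2 * n) (-n) le_rfl (by push_cast; ring)
  rw [ht_of_le P le_rfl, Int.toNat_zero] at hd
  have hc := two_mul_count_stepWord (h := P.ht) (a := -n) (N := n)
    (fun x h1 h2 => ht_step P h1 h2) (2 * n) (-n) le_rfl (by push_cast; linarith)
  rw [ht_of_le P le_rfl, ht_of_ge P (by push_cast; linarith)] at hc
  push_cast at hc
  rw [prod_qint_chordLen, hd.balanced.weightSum_mul_chordProd]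
  congr 1
  omega

/-! ### The tiles of a cover-inclusive tiling follow the lower path -/

theorem tile_snd_unique {t : Finset (ℤ × ℤ)} (ht : IsDyckTile t) {x z z' : ℤ}
    (h : (x, z) ∈ t) (h' : (x, z') ∈ t) : z = z' := by
  obtain ⟨a, b, f, -, -, -, -, rfl⟩ := ht
  simp only [mem_image, Prod.mk.injEq] at h h'
  obtain ⟨_, _, rfl, rfl⟩ := h
  obtain ⟨_, _, rfl, rfl⟩ := h'
  rfl

theorem tile_adjacent {t : Finset (ℤ × ℤ)} (ht : IsDyckTile t) {x z z' : ℤ}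
    (h : (x, z) ∈ t) (h' : (x + 1, z') ∈ t) : z' = z + 1 ∨ z' = z - 1 := by
  obtain ⟨a, b, f, -, hf, -, -, rfl⟩ := ht
  simp only [mem_image, mem_Icc, Prod.mk.injEq] at h h'
  obtain ⟨_, h1, rfl, rfl⟩ := h
  obtain ⟨_, h2, rfl, rfl⟩ := h'
  exact hf _ h1.1 (by omega)

theorem tile_adjacent_symm {t : Finset (ℤ × ℤ)} (ht : IsDyckTile t) {x x' z z' : ℤ}
    (hx : x' = x + 1 ∨ x = x' + 1) (h : (x, z) ∈ t) (h' : (x', z') ∈ t) :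
    z' = z + 1 ∨ z' = z - 1 := by
  rcases hx with rfl | rfl
  · exact tile_adjacent ht h h'
  · rcases tile_adjacent ht h' h with h | h <;> omega

section tiling

variable {n : ℕ}

/-- The number of boxes over column `x`. -/
def colCount (T : DyckTiling n) (x : ℤ) : ℕ := ((T.upper.ht x - T.lower.ht x) / 2).toNat

theorem upper_ht_eq (T : DyckTiling n) (x : ℤ) :
    T.upper.ht x = T.lower.ht x + 2 * colCount T x := by
  rw [colCount]
  rcases le_or_gt x (-n) with hx | hx
  · simp [ht_of_le _ hx]
  rcases le_or_gt (n : ℤ) x with hx' | hx'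
  · simp [ht_of_ge _ hx']
  have := T.below x
  have h1 := ht_parity T.lower hx.le hx'.le
  have h2 := ht_parity T.upper hx.le hx'.le
  omega

theorem count_eq_zero {lam mu : DyckPath n} {x : ℤ} {m : ℕ} (h : mu.ht x = lam.ht x + 2 * m)
    (hx : x ≤ -n ∨ n ≤ x) : m = 0 := by
  rcases hx with hx | hx
  · rw [ht_of_le _ hx, ht_of_le _ hx] at h
    omega
  · rw [ht_of_ge _ hx, ht_of_ge _ hx] at h
    omega

theorem colCount_eq_zero (T : DyckTiling n) {x : ℤ} (hx : x ≤ -n ∨ n ≤ x) : colCount T x = 0 :=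
  count_eq_zero (upper_ht_eq T x) hx

theorem mem_skewCells_iff {lam mu : DyckPath n} {x z : ℤ} {m : ℕ}
    (h : mu.ht x = lam.ht x + 2 * m) :
    (x, z) ∈ skewCells lam mu ↔ ∃ i < m, z = lam.ht x + 2 * (i : ℤ) := by
  simp only [skewCells, mem_filter, mem_product, mem_Icc]
  constructor
  · rintro ⟨⟨⟨h1, h2⟩, _⟩, h4, h5, h6⟩
    have hp := ht_parity lam h1 h2
    exact ⟨((z - lam.ht x) / 2).toNat, by omega, by omega⟩
  · rintro ⟨i, hi, rfl⟩
    have hx : ¬ (x ≤ -n ∨ n ≤ x) := fun hx => by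
      rw [count_eq_zero h hx] at hi
      omega
    have hp := ht_parity lam (x := x) (by omega) (by omega)
    have h0 := ht_nonneg lam x
    have hn := ht_le mu x
    omega

theorem mem_skewCells (T : DyckTiling n) {x z : ℤ} :
    (x, z) ∈ skewCells T.lower T.upper ↔ ∃ i < colCount T x, z = T.lower.ht x + 2 * i :=
  mem_skewCells_iff (upper_ht_eq T x)

/-- Membership of the `i`-th box over column `x`. -/
def HasBox (h : ℤ → ℤ) (t : Finset (ℤ × ℤ)) (x : ℤ) (i : ℕ) : Prop := (x, h x + 2 * i) ∈ t

theorem exists_tile (T : DyckTiling n) {x : ℤ} {i : ℕ} (hi : i < colCount T x) :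
    ∃ t ∈ T.tiles, HasBox T.lower.ht t x i := by
  have : (x, T.lower.ht x + 2 * (i : ℤ)) ∈ T.tiles.biUnion id := by
    rw [T.cover, mem_skewCells]
    exact ⟨i, hi, rfl⟩
  simpa [HasBox] using this

theorem exists_level (T : DyckTiling n) {t : Finset (ℤ × ℤ)} (ht : t ∈ T.tiles) {x z : ℤ}
    (hxz : (x, z) ∈ t) : ∃ i < colCount T x, z = T.lower.ht x + 2 * i := by
  rw [← mem_skewCells, ← T.cover]
  exact mem_biUnion.2 ⟨t, ht, hxz⟩

theorem HasBox.lt {T : DyckTiling n} {t : Finset (ℤ × ℤ)} (ht : t ∈ T.tiles) {x : ℤ} {i : ℕ}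
    (h : HasBox T.lower.ht t x i) : i < colCount T x := by
  obtain ⟨i', hi', h⟩ := exists_level T ht h
  omega

theorem tile_eq_of_mem (T : DyckTiling n) {t u : Finset (ℤ × ℤ)} (ht : t ∈ T.tiles)
    (hu : u ∈ T.tiles) {p : ℤ × ℤ} (hpt : p ∈ t) (hpu : p ∈ u) : t = u := by
  by_contra hne
  exact disjoint_left.1 (T.disj t ht u hu hne) hpt hpu

/-- A box which lies below a tile belongs to a tile that spans at least the same columns. -/
theorem exists_box_of_below {T : DyckTiling n} (hT : T.CoverInclusive) {t u : Finset (ℤ × ℤ)}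
    (ht : t ∈ T.tiles) (hu : u ∈ T.tiles) {x y z : ℤ} {i i' : ℕ}
    (h : HasBox T.lower.ht t x i) (h' : HasBox T.lower.ht u x i') (hi : i' < i)
    (hy : (y, z) ∈ t) : ∃ m < colCount T y, HasBox T.lower.ht u y m := by
  obtain ⟨z', hz'⟩ := hT t ht u hu ⟨_, h, _, h', rfl, by simpa using hi⟩ _ hy
  obtain ⟨m, hm, rfl⟩ := exists_level T hu hz'
  exact ⟨m, hm, hz'⟩

theorem level_adjacent {T : DyckTiling n} (hT : T.CoverInclusive) {i : ℕ}
    (ih : ∀ m < i, ∀ t ∈ T.tiles, ∀ x, HasBox T.lower.ht t x m →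
      ∀ y z, (y, z) ∈ t → z = T.lower.ht y + 2 * m)
    {t : Finset (ℤ × ℤ)} (ht : t ∈ T.tiles) {y y' z : ℤ} (hy : y' = y + 1 ∨ y = y' + 1)
    (h : HasBox T.lower.ht t y i) (h' : (y', z) ∈ t) : z = T.lower.ht y' + 2 * i := by
  obtain ⟨m, hm, rfl⟩ := exists_level T ht h'
  have hstep : T.lower.ht y' = T.lower.ht y + 1 ∨ T.lower.ht y' = T.lower.ht y - 1 := by
    have hr : ∀ x, 0 < colCount T x → -(n : ℤ) ≤ x ∧ x < n := fun x hx => by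
      by_contra hc
      rw [colCount_eq_zero T (by omega)] at hx
      omega
    have h1 := hr y ((Nat.zero_le _).trans_lt (h.lt ht))
    have h2 := hr y' ((Nat.zero_le _).trans_lt hm)
    rcases hy with rfl | rfl
    · exact ht_step _ h1.1 h1.2
    · rcases ht_step T.lower h2.1 h2.2 with h | h <;> omega
  have hadj := tile_adjacent_symm (T.isDyck t ht) hy h h'
  have hge : i ≤ m := by
    by_contra hlt
    have := ih m (by omega) t ht y' h' y _ h
    omega
  by_contra hne
  have hmi : m = i + 1 := by omega
  subst hmi
  obtain ⟨u, hu, hbox⟩ := exists_tile T (x := y') (i := i) (by omega)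
  obtain ⟨l, hl, hlbox⟩ := exists_box_of_below hT ht hu (x := y') (i := i + 1) h' hbox
    (Nat.lt_succ_self i) h
  have hadj' := tile_adjacent_symm (T.isDyck u hu) hy hlbox hbox
  have hle : i ≤ l := by
    by_contra hlt
    have := ih l (by omega) u hu y hlbox y' _ hbox
    omega
  obtain rfl : l = i := by omega
  obtain rfl := tile_eq_of_mem T ht hu h hlbox
  have := tile_snd_unique (T.isDyck t ht) h' hbox
  omega

theorem level_const {T : DyckTiling n} (hT : T.CoverInclusive) (i : ℕ) :
    ∀ t ∈ T.tiles, ∀ x, HasBox T.lower.ht t x i →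
      ∀ y z, (y, z) ∈ t → z = T.lower.ht y + 2 * i := by
  induction i using Nat.strong_induction_on with
  | _ i ih =>
    intro t ht x hx y z hy
    have hdyck := T.isDyck t ht
    obtain ⟨a, b, f, hab, -, -, -, htab⟩ := hdyck
    have hmem : ∀ y, a ≤ y → y ≤ b → (y, f y) ∈ t := fun y h1 h2 => by
      rw [htab]
      exact mem_image.2 ⟨y, mem_Icc.2 ⟨h1, h2⟩, rfl⟩
    have hrange : ∀ y z, (y, z) ∈ t → a ≤ y ∧ y ≤ b ∧ z = f y := fun y z h => by
      rw [htab] at h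
      obtain ⟨y', h1, h2⟩ := mem_image.1 h
      obtain ⟨rfl, rfl⟩ := Prod.mk.injEq .. ▸ h2
      exact ⟨(mem_Icc.1 h1).1, (mem_Icc.1 h1).2, rfl⟩
    have hxr := hrange _ _ hx
    have hyr := hrange _ _ hy
    have hright : ∀ y, x ≤ y → y ≤ b → HasBox T.lower.ht t y i := by
      intro y hxy
      induction y, hxy using Int.leInduction with
      | base => exact fun _ => hx
      | succ y hxy ihy =>
        intro hyb
        have h1 := hmem (y + 1) (by omega) hyb
        rw [HasBox, ← level_adjacent hT ih ht (Or.inl rfl) (ihy (by omega)) h1]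
        exact h1
    have hleft : ∀ y, y ≤ x → a ≤ y → HasBox T.lower.ht t y i := by
      intro y hxy
      induction y, hxy using Int.leInductionDown with
      | base => exact fun _ => hx
      | pred y hxy ihy =>
        intro hya
        have h1 := hmem (y - 1) hya (by omega)
        rw [HasBox, ← level_adjacent hT ih ht (Or.inr (by omega)) (ihy (by omega)) h1]
        exact h1
    rcases le_total x y with h | h
    · exact tile_snd_unique (T.isDyck t ht) hy (hright y h hyr.2.1)
    · exact tile_snd_unique (T.isDyck t ht) hy (hleft y h hyr.1)

/-- The strip of boxes number `i` over the columns from `a` to `b`. -/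
def strip (h : ℤ → ℤ) (i : ℕ) (a b : ℤ) : Finset (ℤ × ℤ) :=
  (Icc a b).image fun x => (x, h x + 2 * i)

theorem mem_strip {h : ℤ → ℤ} {i : ℕ} {a b x z : ℤ} :
    (x, z) ∈ strip h i a b ↔ a ≤ x ∧ x ≤ b ∧ z = h x + 2 * i := by
  simp only [strip, mem_image, mem_Icc, Prod.mk.injEq]
  constructor
  · rintro ⟨x, h, rfl, rfl⟩
    exact ⟨h.1, h.2, rfl⟩
  · rintro ⟨h1, h2, rfl⟩
    exact ⟨x, ⟨h1, h2⟩, rfl, rfl⟩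

theorem hasBox_strip {h : ℤ → ℤ} {i i' : ℕ} {a b x : ℤ} :
    HasBox h (strip h i a b) x i' ↔ a ≤ x ∧ x ≤ b ∧ i' = i := by
  rw [HasBox, mem_strip]
  constructor <;> rintro ⟨h1, h2, h3⟩ <;> exact ⟨h1, h2, by omega⟩

theorem tile_eq_strip {T : DyckTiling n} (hT : T.CoverInclusive) {t : Finset (ℤ × ℤ)}
    (ht : t ∈ T.tiles) : ∃ (i : ℕ) (a b : ℤ), t = strip T.lower.ht i a b ∧ a ≤ b ∧
      T.lower.ht b = T.lower.ht a ∧ ∀ x, a ≤ x → x ≤ b → T.lower.ht a ≤ T.lower.ht x := by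
  obtain ⟨a, b, f, hab, -, hba, hmin, htab⟩ := T.isDyck t ht
  have hmem : ∀ y, a ≤ y → y ≤ b → (y, f y) ∈ t := fun y h1 h2 => by
    rw [htab]
    exact mem_image.2 ⟨y, mem_Icc.2 ⟨h1, h2⟩, rfl⟩
  have ha := hmem a le_rfl hab
  obtain ⟨i, hi, hfa⟩ := exists_level T ht ha
  have ha' : HasBox T.lower.ht t a i := by rwa [HasBox, ← hfa]
  have hf : ∀ y, a ≤ y → y ≤ b → f y = T.lower.ht y + 2 * i := fun y h1 h2 =>
    level_const hT i t ht a ha' y _ (hmem y h1 h2)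
  refine ⟨i, a, b, ?_, hab, ?_, fun x h1 h2 => ?_⟩
  · rw [htab, strip]
    refine image_congr fun y hy => ?_
    have := mem_Icc.1 (mem_coe.1 hy)
    simp only [hf y this.1 this.2]
  · have := hf b hab le_rfl
    omega
  · have := hmin x h1 h2
    rw [hf x h1 h2, hfa] at this
    omega

/-- The `i`-th boxes over columns `x` and `x + 1` lie in the same tile. -/
def Joined (T : DyckTiling n) (x : ℤ) (i : ℕ) : Prop :=
  ∃ t ∈ T.tiles, HasBox T.lower.ht t x i ∧ HasBox T.lower.ht t (x + 1) i

theorem Joined.of_succ {T : DyckTiling n} (hT : T.CoverInclusive) {x : ℤ} {i : ℕ}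
    (h : Joined T x (i + 1)) : Joined T x i := by
  obtain ⟨t, ht, h1, h2⟩ := h
  obtain ⟨u, hu, h3⟩ := exists_tile T (x := x) (i := i) ((Nat.lt_succ_self i).trans (h1.lt ht))
  obtain ⟨m, hm, h4⟩ := exists_box_of_below hT ht hu h1 h3 (Nat.lt_succ_self i) h2
  have := level_const hT i u hu x h3 _ _ h4
  obtain rfl : m = i := by omega
  exact ⟨u, hu, h3, h4⟩

/-- The number of tiles which cross the step from column `x` to column `x + 1`. -/
def crossCount (T : DyckTiling n) (x : ℤ) : ℕ := sInf {i | ¬ Joined T x i}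

theorem lt_crossCount {T : DyckTiling n} (hT : T.CoverInclusive) {x : ℤ} {i : ℕ} :
    i < crossCount T x ↔ Joined T x i := by
  have hne : colCount T x ∈ {i | ¬ Joined T x i} := fun ⟨t, ht, h, _⟩ => (h.lt ht).false
  constructor
  · intro h
    exact not_not.1 (Nat.notMem_of_lt_sInf h)
  · intro h
    by_contra hle
    have hdown : ∀ m ≤ i, Joined T x (i - m) := by
      intro m
      induction m with
      | zero => exact fun _ => h
      | succ m ihm =>
        intro hm
        refine Joined.of_succ hT ?_
        rw [show i - (m + 1) + 1 = i - m by omega]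
        exact ihm (by omega)
    have h1 := hdown (i - crossCount T x) (by omega)
    rw [show i - (i - crossCount T x) = crossCount T x by omega] at h1
    exact (Nat.sInf_mem ⟨_, hne⟩ : crossCount T x ∈ {i | ¬ Joined T x i}) h1

theorem crossCount_le_left {T : DyckTiling n} (hT : T.CoverInclusive) (x : ℤ) :
    crossCount T x ≤ colCount T x := by
  by_contra h
  obtain ⟨t, ht, h1, _⟩ := (lt_crossCount hT).1 (not_le.1 h)
  exact (h1.lt ht).false

theorem crossCount_le_right {T : DyckTiling n} (hT : T.CoverInclusive) (x : ℤ) :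
    crossCount T x ≤ colCount T (x + 1) := by
  by_contra h
  obtain ⟨t, ht, _, h1⟩ := (lt_crossCount hT).1 (not_le.1 h)
  exact (h1.lt ht).false

theorem isHistory_of_tiling {T : DyckTiling n} (hT : T.CoverInclusive) :
    IsHistory T.lower.ht (colCount T) (crossCount T) (-n) n := by
  refine ⟨colCount_eq_zero T (Or.inr le_rfl), fun y h1 h2 hs => ?_, fun y h1 h2 hs => ?_,
    fun y _ _ => crossCount_le_left hT y, fun y _ _ => crossCount_le_right hT y,
    fun p q hp hpq hq hs hy => ?_, fun p q hp hpq hq hs hy h0 => ?_⟩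
  · have e1 := upper_ht_eq T y
    have e2 := upper_ht_eq T (y + 1)
    rcases ht_step T.upper h1 h2 with h | h <;> omega
  · have e1 := upper_ht_eq T y
    have e2 := upper_ht_eq T (y + 1)
    rcases ht_step T.upper h1 h2 with h | h <;> omega
  · by_contra hlt
    obtain ⟨t, ht, h1, h2⟩ := (lt_crossCount hT).1 (not_le.1 hlt)
    refine (lt_irrefl (crossCount T q)) ((lt_crossCount hT).2 ⟨t, ht, ?_⟩)
    obtain ⟨i, a, b, rfl, hab, hba, hmin⟩ := tile_eq_strip hT ht
    rw [hasBox_strip] at *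
    have h3 := hmin p (by omega) (by omega)
    have h4 : q < b := by
      by_contra hbq
      have := hy b (by omega) (by omega)
      omega
    rw [hasBox_strip]
    omega
  · by_contra hlt
    obtain ⟨t, ht, h1, h2⟩ := (lt_crossCount hT).1 (not_le.1 hlt)
    refine (lt_irrefl (crossCount T p)) ((lt_crossCount hT).2 ⟨t, ht, ?_⟩)
    obtain ⟨i, a, b, rfl, hab, hba, hmin⟩ := tile_eq_strip hT ht
    rw [hasBox_strip] at *
    have h3 := hmin (q + 1) (by omega) (by omega)
    have h4 : a ≤ p := by
      by_contra hap
      have := hy a (by omega) (by omega)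
      omega
    rw [hasBox_strip]
    omega

end tiling

/-- The columns from `a` to `b` form a maximal run of columns whose `i`-th boxes are joined, where
`k` counts the boxes over each column and `j` the joins between consecutive columns. -/
structure IsRun (k j : ℤ → ℕ) (i : ℕ) (a b : ℤ) : Prop where
  le : a ≤ b
  lt_count : i < k a
  joined : ∀ x, a ≤ x → x < b → i < j x
  left_end : j (a - 1) ≤ i
  right_end : j b ≤ i

theorem IsRun.unique {k j : ℤ → ℕ} {i : ℕ} {a b a' b' x : ℤ} (h : IsRun k j i a b)
    (h' : IsRun k j i a' b') (hx : a ≤ x ∧ x ≤ b) (hx' : a' ≤ x ∧ x ≤ b') : a = a' ∧ b = b' := by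
  have h1 := h.joined (a' - 1)
  have h2 := h'.joined (a - 1)
  have h3 := h.joined b'
  have h4 := h'.joined b
  have := h.left_end
  have := h'.left_end
  have := h.right_end
  have := h'.right_end
  omega

/-- The number of boxes over each column and of joins between consecutive columns, for a tiling
over a path of height `h` and order `n`. -/
structure IsProfile (n : ℕ) (h : ℤ → ℤ) (k j : ℤ → ℕ) : Prop where
  history : IsHistory h k j (-n) n
  count_eq_zero : ∀ x : ℤ, x ≤ -n ∨ n ≤ x → k x = 0
  join_eq_zero : ∀ x : ℤ, x < -n ∨ n ≤ x → j x = 0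

namespace IsProfile

variable {n : ℕ} {h : ℤ → ℤ} {k j : ℤ → ℕ}

theorem join_le_left (H : IsProfile n h k j) (x : ℤ) : j x ≤ k x := by
  by_cases hx : x < -n ∨ n ≤ x
  · simp [H.join_eq_zero x hx]
  · exact H.history.le_left x (by omega) (by omega)

theorem join_le_right (H : IsProfile n h k j) (x : ℤ) : j x ≤ k (x + 1) := by
  by_cases hx : x < -n ∨ n ≤ x
  · simp [H.join_eq_zero x hx]
  · exact H.history.le_right x (by omega) (by omega)

theorem mem_Ioo (H : IsProfile n h k j) {i : ℕ} {x : ℤ} (hx : i < k x) : -(n : ℤ) < x ∧ x < n := by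
  by_contra hc
  rw [H.count_eq_zero x (by omega)] at hx
  omega

theorem lt_count_of_isRun (H : IsProfile n h k j) {i : ℕ} {a b x : ℤ} (hr : IsRun k j i a b)
    (hax : a ≤ x) (hxb : x ≤ b) : i < k x := by
  rcases hax.eq_or_lt with rfl | hlt
  · exact hr.lt_count
  · have := hr.joined (x - 1) (by omega) (by omega)
    have h1 := H.join_le_right (x - 1)
    rw [sub_add_cancel] at h1
    omega

theorem exists_isRun (H : IsProfile n h k j) {i : ℕ} {x : ℤ} (hx : i < k x) :
    ∃ a b, IsRun k j i a b ∧ a ≤ x ∧ x ≤ b := by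
  have hxn := H.mem_Ioo hx
  obtain ⟨b, ⟨hxb, hb⟩, hbmin⟩ := Int.exists_least_of_bdd (P := fun b => x ≤ b ∧ j b ≤ i)
    ⟨x, fun z hz => hz.1⟩ ⟨n, hxn.2.le, by simp [H.join_eq_zero n (Or.inr le_rfl)]⟩
  obtain ⟨a, ⟨hax, ha⟩, hamax⟩ := Int.exists_greatest_of_bdd (P := fun a => a ≤ x ∧ j (a - 1) ≤ i)
    ⟨x, fun z hz => hz.1⟩ ⟨-n, hxn.1.le, by simp [H.join_eq_zero (-n - 1) (Or.inl (by omega))]⟩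
  have hj : ∀ y, a ≤ y → y < b → i < j y := by
    intro y h1 h2
    by_contra hc
    rcases le_or_gt x y with hxy | hxy
    · have := hbmin y ⟨hxy, by omega⟩
      omega
    · have := hamax (y + 1) ⟨by omega, by rw [add_sub_cancel_right]; omega⟩
      omega
  refine ⟨a, b, ⟨by omega, ?_, hj, ha, hb⟩, hax, hxb⟩
  rcases hax.eq_or_lt with rfl | hlt
  · exact hx
  · exact (hj a le_rfl (by omega)).trans_le (H.join_le_left a)

theorem right_le_of_isRun (H : IsProfile n h k j)
    (hstep : ∀ x : ℤ, -n ≤ x → x < n → h (x + 1) = h x + 1 ∨ h (x + 1) = h x - 1) {i : ℕ}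
    {a b x : ℤ} (hr : IsRun k j i a b) (hax : a ≤ x) (hxb : x ≤ b) : h b ≤ h x := by
  by_contra hlt
  have ha := H.mem_Ioo hr.lt_count
  have hb := H.mem_Ioo (H.lt_count_of_isRun hr hr.le le_rfl)
  obtain ⟨p, ⟨hxp, hpb, hp⟩, hmax⟩ :=
    Int.exists_greatest_of_bdd (P := fun p => x ≤ p ∧ p ≤ b ∧ h p < h b)
      ⟨b, fun z hz => hz.2.1⟩ ⟨x, le_rfl, hxb, by omega⟩
  have hpb' : p < b := lt_of_le_of_ne hpb (by rintro rfl; omega)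
  have hgt : ∀ y, p < y → y ≤ b → h b ≤ h y := fun y h1 h2 => by
    by_contra hc
    have := hmax y ⟨by omega, h2, by omega⟩
    omega
  have h1 := hgt (p + 1) (by omega) (by omega)
  have h2 := H.history.opening p b (by omega) hpb hb.2
    (by rcases hstep p (by omega) (by omega) with h | h <;> omega)
    fun y h1 h2 => by have := hgt y h1 h2; omega
  have h3 := hr.joined p (by omega) hpb'
  have h4 := hr.right_end
  omega

theorem left_le_of_isRun (H : IsProfile n h k j)
    (hstep : ∀ x : ℤ, -n ≤ x → x < n → h (x + 1) = h x + 1 ∨ h (x + 1) = h x - 1)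
    (h0 : h (-n) = 0) (hnonneg : ∀ x, 0 ≤ h x) {i : ℕ}
    {a b x : ℤ} (hr : IsRun k j i a b) (hax : a ≤ x) (hxb : x ≤ b) : h a ≤ h x := by
  by_contra hlt
  have ha := H.mem_Ioo hr.lt_count
  have hb := H.mem_Ioo (H.lt_count_of_isRun hr hr.le le_rfl)
  obtain ⟨r, ⟨har, hrx, hra⟩, hmin⟩ :=
    Int.exists_least_of_bdd (P := fun r => a ≤ r ∧ r ≤ x ∧ h r < h a)
      ⟨a, fun z hz => hz.1⟩ ⟨x, hax, le_rfl, by omega⟩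
  have har' : a < r := lt_of_le_of_ne har (by rintro rfl; omega)
  have hx0 := hnonneg x
  obtain ⟨p, ⟨hpa, hp⟩, hmax⟩ :=
    Int.exists_greatest_of_bdd (P := fun p => p ≤ a ∧ h p < h a)
      ⟨a, fun z hz => hz.1⟩ ⟨-n, ha.1.le, by omega⟩
  have hpn : -(n : ℤ) ≤ p := hmax (-n) ⟨ha.1.le, by omega⟩
  have hpa' : p < a := lt_of_le_of_ne hpa (by rintro rfl; omega)
  have hgt : ∀ y, p < y → y < r → h a ≤ h y := fun y h1 h2 => by
    by_contra hc
    rcases le_or_gt y a with hya | hya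
    · have := hmax y ⟨hya, by omega⟩
      omega
    · have := hmin y ⟨by omega, by omega, by omega⟩
      omega
  have h1 := hgt (p + 1) (by omega) (by omega)
  have h2 := hgt (r - 1) (by omega) (by omega)
  have hup : h (p + 1) = h p + 1 := by rcases hstep p (by omega) (by omega) with h | h <;> omega
  have hdown := hstep (r - 1) (by omega) (by omega)
  rw [sub_add_cancel] at hdown
  have hop := H.history.opening p (a - 1) (by omega) (by omega) (by omega) hup
    fun y h1 h2 => by have := hgt y h1 (by omega); omega
  have hcl := H.history.closing p (r - 1) (by omega) (by omega) (by omega) hup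
    (fun y h1 h2 => by have := hgt y h1 (by omega); omega) (by rw [sub_add_cancel]; omega)
  have h3 := hr.joined (r - 1) (by omega) (by omega)
  have h4 := hr.left_end
  omega

theorem isDyckTile_strip (H : IsProfile n h k j)
    (hstep : ∀ x : ℤ, -n ≤ x → x < n → h (x + 1) = h x + 1 ∨ h (x + 1) = h x - 1)
    (h0 : h (-n) = 0) (hnonneg : ∀ x, 0 ≤ h x) {i : ℕ} {a b : ℤ} (hr : IsRun k j i a b) :
    IsDyckTile (strip h i a b) := by
  have ha := H.mem_Ioo hr.lt_count
  have hb := H.mem_Ioo (H.lt_count_of_isRun hr hr.le le_rfl)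
  refine ⟨a, b, fun x => h x + 2 * i, hr.le, fun x h1 h2 => ?_, ?_, fun x h1 h2 => ?_, rfl⟩
  · rcases hstep x (by omega) (by omega) with h | h <;> [left; right] <;> simp only [h] <;> ring
  · have h1 := H.right_le_of_isRun hstep hr le_rfl hr.le
    have h2 := H.left_le_of_isRun hstep h0 hnonneg hr hr.le le_rfl
    simp only [le_antisymm h1 h2]
  · simpa using H.left_le_of_isRun hstep h0 hnonneg hr h1 h2

end IsProfile

section tiling

variable {n : ℕ}

theorem isProfile_of_tiling {T : DyckTiling n} (hT : T.CoverInclusive) :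
    IsProfile n T.lower.ht (colCount T) (crossCount T) := by
  refine ⟨isHistory_of_tiling hT, fun x hx => colCount_eq_zero T hx, fun x hx => ?_⟩
  have := crossCount_le_left hT x
  rw [colCount_eq_zero T (by omega)] at this
  omega

theorem mem_tiles_iff {T : DyckTiling n} (hT : T.CoverInclusive) {t : Finset (ℤ × ℤ)} :
    t ∈ T.tiles ↔ ∃ (i : ℕ) (a b : ℤ), IsRun (colCount T) (crossCount T) i a b ∧
      t = strip T.lower.ht i a b := by
  have key : ∀ t ∈ T.tiles, ∃ (i : ℕ) (a b : ℤ), IsRun (colCount T) (crossCount T) i a b ∧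
      t = strip T.lower.ht i a b := by
    intro t ht
    obtain ⟨i, a, b, rfl, hab, -, -⟩ := tile_eq_strip hT ht
    have ha : HasBox T.lower.ht (strip T.lower.ht i a b) a i := hasBox_strip.2 ⟨le_rfl, hab, rfl⟩
    have hb : HasBox T.lower.ht (strip T.lower.ht i a b) b i := hasBox_strip.2 ⟨hab, le_rfl, rfl⟩
    refine ⟨i, a, b, ⟨hab, ha.lt ht, fun x h1 h2 => (lt_crossCount hT).2 ⟨_, ht, ?_, ?_⟩, ?_, ?_⟩,
      rfl⟩
    · exact hasBox_strip.2 ⟨h1, h2.le, rfl⟩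
    · exact hasBox_strip.2 ⟨by omega, by omega, rfl⟩
    · by_contra hlt
      obtain ⟨u, hu, h1, h2⟩ := (lt_crossCount hT).1 (not_le.1 hlt)
      rw [sub_add_cancel] at h2
      obtain rfl := tile_eq_of_mem T ht hu ha h2
      have := hasBox_strip.1 h1
      omega
    · by_contra hlt
      obtain ⟨u, hu, h1, h2⟩ := (lt_crossCount hT).1 (not_le.1 hlt)
      obtain rfl := tile_eq_of_mem T ht hu hb h1
      have := hasBox_strip.1 h2
      omega
  refine ⟨key t, ?_⟩
  rintro ⟨i, a, b, hr, rfl⟩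
  obtain ⟨u, hu, h1⟩ := exists_tile T hr.lt_count
  obtain ⟨i', a', b', hr', rfl⟩ := key u hu
  obtain ⟨h2, h3, rfl⟩ := hasBox_strip.1 h1
  obtain ⟨rfl, rfl⟩ := hr.unique hr' ⟨le_rfl, hr.le⟩ ⟨h2, h3⟩
  exact hu

theorem tiling_ext {T T' : DyckTiling n} (hT : T.CoverInclusive) (hT' : T'.CoverInclusive)
    (hlow : T.lower = T'.lower) (hk : colCount T = colCount T')
    (hj : crossCount T = crossCount T') : T = T' := by
  have hup : T.upper = T'.upper := dyckPath_ext fun x => by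
    rw [upper_ht_eq, upper_ht_eq, hlow, hk]
  have htiles : T.tiles = T'.tiles := by
    ext t
    rw [mem_tiles_iff hT, mem_tiles_iff hT', hlow, hk, hj]
  cases T
  cases T'
  cases hlow
  cases hup
  cases htiles
  rfl

end tiling

variable {n : ℕ}

theorem exists_upper {lam : DyckPath n} {k j : ℤ → ℕ} (H : IsProfile n lam.ht k j) :
    ∃ mu : DyckPath n, ∀ x, mu.ht x = lam.ht x + 2 * k x := by
  have hz := H.count_eq_zero
  obtain ⟨mu, hmu⟩ := exists_dyckPath (n := n) (f := fun x => lam.ht x + 2 * k x)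
    (by simp [ht_of_le lam le_rfl, hz (-n) (Or.inl le_rfl)])
    (by simp [ht_of_ge lam le_rfl, hz n (Or.inr le_rfl)])
    (fun x => by have := ht_nonneg lam x; omega)
    (fun x h1 h2 => by
      rcases ht_step lam h1 h2 with h | h
      · have := H.history.up x h1 h2 h
        omega
      · have := H.history.down x h1 h2 h
        omega)
  refine ⟨mu, fun x => ?_⟩
  by_cases hx : x < -n ∨ n < x
  · rw [hz x (by omega)]
    rcases hx with hx | hx
    · rw [ht_of_le _ hx.le, ht_of_le _ hx.le]
      simp
    · rw [ht_of_ge _ hx.le, ht_of_ge _ hx.le]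
      simp
  · exact hmu x (by omega) (by omega)

open Classical in
/-- The strips over the runs of a profile. -/
def runStrips (n : ℕ) (h : ℤ → ℤ) (k j : ℤ → ℕ) : Finset (Finset (ℤ × ℤ)) :=
  (((Icc (-(n : ℤ)) n).biUnion fun x => (range (k x)).image fun i => (x, i)) ×ˢ
    Icc (-(n : ℤ)) n).filter (fun p => IsRun k j p.1.2 p.1.1 p.2) |>.image
      fun p => strip h p.1.2 p.1.1 p.2

theorem mem_runStrips {h : ℤ → ℤ} {k j : ℤ → ℕ} (H : IsProfile n h k j) {t : Finset (ℤ × ℤ)} :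
    t ∈ runStrips n h k j ↔ ∃ (i : ℕ) (a b : ℤ), IsRun k j i a b ∧ t = strip h i a b := by
  simp only [runStrips, mem_image, mem_filter, mem_product, mem_biUnion, mem_Icc, mem_range]
  constructor
  · rintro ⟨⟨⟨a, i⟩, b⟩, ⟨-, hr⟩, rfl⟩
    exact ⟨i, a, b, hr, rfl⟩
  · rintro ⟨i, a, b, hr, rfl⟩
    have ha := H.mem_Ioo hr.lt_count
    have hb := H.mem_Ioo (H.lt_count_of_isRun hr hr.le le_rfl)
    exact ⟨((a, i), b), ⟨⟨⟨a, ⟨ha.1.le, ha.2.le⟩, i, hr.lt_count, rfl⟩, hb.1.le, hb.2.le⟩, hr⟩, rfl⟩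

theorem exists_tiling {lam : DyckPath n} {k j : ℤ → ℕ} (H : IsProfile n lam.ht k j) :
    ∃ T : DyckTiling n, T.CoverInclusive ∧ T.lower = lam ∧ colCount T = k ∧ crossCount T = j := by
  obtain ⟨mu, hmu⟩ := exists_upper H
  have hmem := @mem_runStrips n lam.ht k j H
  let T : DyckTiling n :=
    { lower := lam
      upper := mu
      below := fun x => by rw [hmu]; omega
      tiles := runStrips n lam.ht k j
      isDyck := fun t ht => by
        obtain ⟨i, a, b, hr, rfl⟩ := hmem.1 ht
        exact H.isDyckTile_strip (fun x => ht_step lam) (ht_of_le lam le_rfl) (ht_nonneg lam) hr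
      disj := fun t ht u hu hne => by
        obtain ⟨i, a, b, hr, rfl⟩ := hmem.1 ht
        obtain ⟨i', a', b', hr', rfl⟩ := hmem.1 hu
        refine disjoint_left.2 ?_
        rintro ⟨x, z⟩ h1 h2
        obtain ⟨h3, h4, rfl⟩ := mem_strip.1 h1
        obtain ⟨h5, h6, h7⟩ := mem_strip.1 h2
        obtain rfl : i = i' := by omega
        obtain ⟨rfl, rfl⟩ := hr.unique hr' ⟨h3, h4⟩ ⟨h5, h6⟩
        exact hne rfl
      cover := by
        ext ⟨x, z⟩
        rw [mem_skewCells_iff (hmu x), mem_biUnion]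
        constructor
        · rintro ⟨t, ht, hxz⟩
          obtain ⟨i, a, b, hr, rfl⟩ := hmem.1 ht
          obtain ⟨h3, h4, rfl⟩ := mem_strip.1 hxz
          exact ⟨i, H.lt_count_of_isRun hr h3 h4, rfl⟩
        · rintro ⟨i, hi, rfl⟩
          obtain ⟨a, b, hr, h1, h2⟩ := H.exists_isRun hi
          exact ⟨_, hmem.2 ⟨i, a, b, hr, rfl⟩, mem_strip.2 ⟨h1, h2, rfl⟩⟩ }
  have hT : T.CoverInclusive := by
    rintro t ht u hu ⟨⟨x, z⟩, hp, ⟨x', z'⟩, hq, hxx, hzz⟩ ⟨y, w⟩ hy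
    obtain ⟨i, a, b, hr, rfl⟩ := hmem.1 ht
    obtain ⟨i', a', b', hr', rfl⟩ := hmem.1 hu
    simp only at hxx hzz
    subst hxx
    obtain ⟨h3, h4, rfl⟩ := mem_strip.1 hp
    obtain ⟨h5, h6, rfl⟩ := mem_strip.1 hq
    obtain ⟨h7, h8, rfl⟩ := mem_strip.1 hy
    have h1 := hr.joined (a' - 1)
    have h2 := hr.joined b'
    have := hr'.left_end
    have := hr'.right_end
    exact ⟨_, mem_strip.2 ⟨by simp only; omega, by simp only; omega, rfl⟩⟩
  refine ⟨T, hT, rfl, ?_, ?_⟩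
  · ext x
    have h1 := upper_ht_eq T x
    have h2 := hmu x
    change mu.ht x = lam.ht x + 2 * colCount T x at h1
    omega
  · ext x
    refine eq_of_forall_lt_iff fun i => ?_
    rw [lt_crossCount hT]
    constructor
    · rintro ⟨t, ht, h1, h2⟩
      obtain ⟨i', a, b, hr, rfl⟩ := hmem.1 ht
      obtain ⟨h3, h4, rfl⟩ := hasBox_strip.1 h1
      obtain ⟨h5, h6, -⟩ := hasBox_strip.1 h2
      exact hr.joined x h3 (by omega)
    · intro hi
      obtain ⟨a, b, hr, h1, h2⟩ := H.exists_isRun (hi.trans_le (H.join_le_left x))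
      have hxb : x < b := lt_of_le_of_ne h2 (by
        rintro rfl
        have := hr.right_end
        omega)
      exact ⟨_, hmem.2 ⟨i, a, b, hr, rfl⟩, hasBox_strip.2 ⟨h1, h2, rfl⟩,
        hasBox_strip.2 ⟨by omega, by omega, rfl⟩⟩

theorem area_eq_sum (T : DyckTiling n) : T.area = ∑ y ∈ Ico (-(n : ℤ)) n, colCount T (y + 1) := by
  rw [DyckTiling.area]
  have : ∑ y ∈ Ico (-(n : ℤ)) n, colCount T (y + 1) =
      ((Ico (-(n : ℤ)) n).sigma fun y => range (colCount T (y + 1))).card := by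
    simp [card_sigma]
  rw [this]
  symm
  refine card_bij (fun p _ => (p.1 + 1, T.lower.ht (p.1 + 1) + 2 * p.2)) ?_ ?_ ?_
  · rintro ⟨y, i⟩ h
    rw [mem_sigma, mem_range] at h
    exact (mem_skewCells T).2 ⟨i, h.2, rfl⟩
  · rintro ⟨y, i⟩ - ⟨y', i'⟩ - h
    rw [Prod.mk.injEq] at h
    obtain ⟨h1, h2⟩ := h
    obtain rfl : y = y' := by simpa using h1
    obtain rfl : i = i' := by simpa using h2
    rfl
  · rintro ⟨x, z⟩ h
    obtain ⟨i, hi, rfl⟩ := (mem_skewCells T).1 h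
    have hx : ¬ (x ≤ -n ∨ n ≤ x) := fun hx => by
      rw [colCount_eq_zero T hx] at hi
      omega
    refine ⟨⟨x - 1, i⟩, ?_, ?_⟩
    · rw [mem_sigma, mem_range, mem_Ico, sub_add_cancel]
      exact ⟨by dsimp only; omega, hi⟩
    · simp only [sub_add_cancel]

theorem numTiles_eq_sum {T : DyckTiling n} (hT : T.CoverInclusive) :
    T.numTiles = ∑ y ∈ Ico (-(n : ℤ)) n, (colCount T (y + 1) - crossCount T y) := by
  have H := isProfile_of_tiling hT
  have hsum : ∑ y ∈ Ico (-(n : ℤ)) n, (colCount T (y + 1) - crossCount T y) =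
      ((Ico (-(n : ℤ)) n).sigma fun y => Ico (crossCount T y) (colCount T (y + 1))).card := by
    simp [card_sigma]
  rw [DyckTiling.numTiles, hsum]
  have hrun : ∀ p ∈ (Ico (-(n : ℤ)) n).sigma fun y => Ico (crossCount T y) (colCount T (y + 1)),
      ∃ b, IsRun (colCount T) (crossCount T) p.2 (p.1 + 1) b := by
    rintro ⟨y, i⟩ h
    rw [mem_sigma, mem_Ico, mem_Ico] at h
    obtain ⟨a, b, hr, h1, h2⟩ := H.exists_isRun h.2.2
    have := hr.joined y
    obtain rfl : a = y + 1 := by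
      dsimp only at *
      omega
    exact ⟨b, hr⟩
  choose! b hb using hrun
  symm
  refine card_bij (fun p _ => strip T.lower.ht p.2 (p.1 + 1) (b p)) (fun p hp => ?_) ?_ ?_
  · exact (mem_tiles_iff hT).2 ⟨_, _, _, hb p hp, rfl⟩
  · intro p hp p' hp' heq
    have h1 : HasBox T.lower.ht (strip T.lower.ht p.2 (p.1 + 1) (b p)) (p.1 + 1) p.2 :=
      hasBox_strip.2 ⟨le_rfl, (hb p hp).le, rfl⟩
    have h2 : HasBox T.lower.ht (strip T.lower.ht p'.2 (p'.1 + 1) (b p')) (p'.1 + 1) p'.2 :=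
      hasBox_strip.2 ⟨le_rfl, (hb p' hp').le, rfl⟩
    rw [heq, hasBox_strip] at h1
    rw [← heq, hasBox_strip] at h2
    exact Sigma.ext (by omega) (heq_of_eq h1.2.2)
  · intro t ht
    obtain ⟨i, a, c, hr, rfl⟩ := (mem_tiles_iff hT).1 ht
    have ha := H.mem_Ioo hr.lt_count
    have hp : (⟨a - 1, i⟩ : Σ _ : ℤ, ℕ) ∈
        (Ico (-(n : ℤ)) n).sigma fun y => Ico (crossCount T y) (colCount T (y + 1)) := by
      rw [mem_sigma, mem_Ico, mem_Ico, sub_add_cancel]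
      exact ⟨by dsimp only; omega, hr.left_end, hr.lt_count⟩
    refine ⟨_, hp, ?_⟩
    have hr' := hb _ hp
    simp only [sub_add_cancel] at hr' ⊢
    rw [(hr.unique hr' ⟨le_rfl, hr.le⟩ ⟨le_rfl, hr'.le⟩).2]

theorem record_mem_histories_of_tiling {T : DyckTiling n} (hT : T.CoverInclusive) :
    record (colCount T) (crossCount T) (2 * n) (-n) ∈
      histories (stepWord T.lower.ht (2 * n) (-n)) 0 [] :=
  (record_mem_histories (fun _ h1 h2 => ht_step T.lower h2 h1) (ht_nonneg _)
    (ht_of_ge _ le_rfl) (ht_of_le _ le_rfl) (crossCount T)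
    (colCount_eq_zero T (Or.inl le_rfl))).2 (isHistory_of_tiling hT)

theorem art_eq_histWeight {T : DyckTiling n} (hT : T.CoverInclusive) :
    T.art = histWeight (stepWord T.lower.ht (2 * n) (-n))
      (record (colCount T) (crossCount T) (2 * n) (-n)) := by
  have hw := two_mul_histWeight _ _ _ _ (record_mem_histories_of_tiling hT) (by simp)
  have hfst : ((record (colCount T) (crossCount T) (2 * n) (-n)).map Prod.fst).sum =
      ∑ y ∈ Ico (-(n : ℤ)) n, crossCount T y := by
    have : (record (colCount T) (crossCount T) (2 * n) (-n)).map Prod.fst =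
        sample (crossCount T) (2 * n) (-n) := by
      simp [record, sample]
    rw [this, sum_sample]
    congr 2
    push_cast
    ring
  have hsnd : ((record (colCount T) (crossCount T) (2 * n) (-n)).map Prod.snd).sum =
      ∑ y ∈ Ico (-(n : ℤ)) n, colCount T (y + 1) := by
    have : (record (colCount T) (crossCount T) (2 * n) (-n)).map Prod.snd =
        sample (fun y => colCount T (y + 1)) (2 * n) (-n) := by
      simp [record, sample]
    rw [this, sum_sample]
    congr 2
    push_cast
    ring
  have hle : ∑ y ∈ Ico (-(n : ℤ)) n, crossCount T y ≤ ∑ y ∈ Ico (-(n : ℤ)) n, colCount T (y + 1) :=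
    sum_le_sum fun y _ => crossCount_le_right hT y
  rw [hfst, hsnd, List.sum_nil] at hw
  rw [DyckTiling.art, area_eq_sum, numTiles_eq_sum hT,
    sum_tsub_distrib _ fun y _ => crossCount_le_right hT y]
  omega

theorem tiling_eq_of_record_eq {T T' : DyckTiling n} (hT : T.CoverInclusive)
    (hT' : T'.CoverInclusive) (hlow : T.lower = T'.lower)
    (h : record (colCount T) (crossCount T) (2 * n) (-n) =
      record (colCount T') (crossCount T') (2 * n) (-n)) : T = T' := by
  have hrec := record_inj h
  have H := isProfile_of_tiling hT
  have H' := isProfile_of_tiling hT'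
  refine tiling_ext hT hT' hlow (funext fun x => ?_) (funext fun x => ?_)
  · by_cases hx : x ≤ -n ∨ n ≤ x
    · rw [H.count_eq_zero x hx, H'.count_eq_zero x hx]
    · simpa using (hrec (x - 1) (by omega) (by omega)).2
  · by_cases hx : x < -n ∨ n ≤ x
    · rw [H.join_eq_zero x hx, H'.join_eq_zero x hx]
    · exact (hrec x (by omega) (by omega)).1

theorem exists_tiling_of_mem_histories {lam : DyckPath n} {l : List (ℕ × ℕ)}
    (hl : l ∈ histories (stepWord lam.ht (2 * n) (-n)) 0 []) :
    ∃ T : DyckTiling n, T.CoverInclusive ∧ T.lower = lam ∧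
      record (colCount T) (crossCount T) (2 * n) (-n) = l := by
  have hlen : l.length = 2 * n := by
    rw [length_of_mem_histories _ _ _ _ hl]
    simp [stepWord, sample]
  obtain ⟨k, j, hk, hj, hrec⟩ := exists_record_eq l (-n)
  rw [hlen] at hk hj hrec
  rw [← hrec] at hl
  have H := (record_mem_histories (fun _ h1 h2 => ht_step lam h2 h1) (ht_nonneg _)
    (ht_of_ge _ le_rfl) (ht_of_le _ le_rfl) j (hk _ (Or.inl le_rfl))).1 hl
  have hprof : IsProfile n lam.ht k j := by
    refine ⟨H, fun x hx => ?_, fun x hx => hj x (by omega)⟩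
    by_cases hxn : x = n
    · rw [hxn, H.last]
    · exact hk x (by omega)
  obtain ⟨T, hT, hlow, hkT, hjT⟩ := exists_tiling hprof
  exact ⟨T, hT, hlow, by rw [hkT, hjT, hrec]⟩

theorem finsum_art_eq_weightSum (lam : DyckPath n) :
    ∑ᶠ T : {T : DyckTiling n // T.CoverInclusive ∧ T.lower = lam},
        (Polynomial.X : Polynomial ℤ) ^ T.1.art =
      weightSum (stepWord lam.ht (2 * n) (-n)) 0 [] := by
  let S := histories (stepWord lam.ht (2 * n) (-n)) 0 []
  let toHistory : {T : DyckTiling n // T.CoverInclusive ∧ T.lower = lam} → S := fun T =>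
    ⟨record (colCount T.1) (crossCount T.1) (2 * n) (-n), by
      have := record_mem_histories_of_tiling T.2.1
      rwa [T.2.2] at this⟩
  have hbij : Function.Bijective toHistory := by
    constructor
    · intro T T' h
      exact Subtype.ext (tiling_eq_of_record_eq T.2.1 T'.2.1 (T.2.2.trans T'.2.2.symm)
        (congrArg Subtype.val h))
    · rintro ⟨l, hl⟩
      obtain ⟨T, hT, hlow, hrec⟩ := exists_tiling_of_mem_histories hl
      exact ⟨⟨T, hT, hlow⟩, Subtype.ext hrec⟩
  rw [weightSum_eq_sum_histories, finsum_eq_of_bijective toHistory hbij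
    (g := fun l => Polynomial.X ^ histWeight (stepWord lam.ht (2 * n) (-n)) l.1)
    fun T => by rw [art_eq_histWeight T.2.1, T.2.2], finsum_eq_sum_of_fintype]
  exact sum_coe_sort S fun l => Polynomial.X ^ histWeight (stepWord lam.ht (2 * n) (-n)) l

end DyckTilingArt

/-- For every Dyck path `λ` of order `n`,
`Σ_{T ∈ D(λ,*)} q^{art(T)} = [n]_q! / Π_{chords c of λ} [|c|]_q`
(stated in the equivalent cleared-denominator form, as an identity in `ℤ[q]`;
the product over chords is expressed via an arbitrary labeling of the chords). -/
theorem dyck_tilings_art_generating_function (n : ℕ) (lam : DyckPath n)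
    (C : ChordLabeling lam) :
    (∑ᶠ T : {T : DyckTiling n // T.CoverInclusive ∧ T.lower = lam},
        (Polynomial.X : Polynomial ℤ) ^ T.1.art) * ∏ i : Fin n, qint (chordLen C i) =
      qfact n := by
  rw [DyckTilingArt.finsum_art_eq_weightSum, DyckTilingArt.weightSum_mul_prod_qint]

end
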